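/- arXiv:2604.20525 — 2 statements merged into one kernel-verified Lean document; each statement's English description precedes it below -/
import Mathlib

section
/- Let a₀ ∈ C_c^∞(ℝ²) be real-valued with supp a₀ ⊂ (−1/2, 1/2)², and for j = (j₁, j₂) ∈ ℤ² let a_j(x,y) := a₀(x − j₁, y − j₂). Then for every N > 0 there exists a constant C_N > 0, depending only on a₀ and N, such that for all h ∈ (0,1) and all i ≠ j in ℤ², the operator norm of the composition satisfies ‖â_i ∘ â_j‖ ≤ C_N h^N |i − j|^{−N}. -/
/-!
STATEMENT 2: Let a₀ ∈ C_c^∞(ℝ²) be real-valued with supp a₀ ⊂ (−1/2,1/2)²,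
and for j ∈ ℤ² let a_j be the translate of a₀ by j.  Then for every N > 0
there is C_N > 0, depending only on a₀ and N, such that for all h ∈ (0,1) and
all i ≠ j in ℤ², ‖â_i ∘ â_j‖ ≤ C_N h^N |i−j|^{−N} (operator norm on L²(ℝ)).
-/

open MeasureTheory Complex Real

noncomputable section

/-- The Hilbert space `L²(ℝ)` of complex-valued square-integrable functions. -/
abbrev L2R := MeasureTheory.Lp ℂ 2 (MeasureTheory.volume : MeasureTheory.Measure ℝ)

/-- The semiclassical Weyl kernel of a symbol `a : ℝ² → ℝ` at parameter `h`. -/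
def weylKernel (h : ℝ) (a : ℝ × ℝ → ℝ) (y y' : ℝ) : ℂ :=
  ((1 / (2 * Real.pi * h) : ℝ) : ℂ) *
    ∫ η : ℝ, Complex.exp (Complex.I * (((y - y') * η / h : ℝ) : ℂ)) *
      ((a ((y + y') / 2, η) : ℝ) : ℂ)

/-- `T` is the semiclassical Weyl quantization of the symbol `a` at parameter `h`. -/
def IsWeylQuant (h : ℝ) (a : ℝ × ℝ → ℝ) (T : L2R →L[ℂ] L2R) : Prop :=
  ∀ u : L2R, (T u : ℝ → ℂ) =ᵐ[volume]
    fun y => ∫ y' : ℝ, weylKernel h a y y' * (u : ℝ → ℂ) y'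

/-- The translate of a symbol by a lattice point `j ∈ ℤ²`. -/
def shiftSymbol (a : ℝ × ℝ → ℝ) (j : ℤ × ℤ) : ℝ × ℝ → ℝ :=
  fun p => a (p.1 - (j.1 : ℝ), p.2 - (j.2 : ℝ))

/-- Euclidean length of a lattice vector in `ℤ²`. -/
def latticeNorm (j : ℤ × ℤ) : ℝ :=
  Real.sqrt ((j.1 : ℝ) ^ 2 + (j.2 : ℝ) ^ 2)


lemma osc {E : Type*} [NormedAddCommGroup E] [NormedSpace ℝ E] (M : ℕ) :
    ∀ B : E × ℝ → ℂ, ContDiff ℝ (⊤ : ℕ∞) B → HasCompactSupport B →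
      ∃ C : ℝ, 0 ≤ C ∧ ∀ (e : E) (t : ℝ),
        |t| ^ M * ‖∫ z : ℝ, Complex.exp (Complex.I * ((t * z : ℝ) : ℂ)) * B (e, z)‖ ≤ C := by
  induction M with
  | zero =>
    intro B hB hc
    obtain ⟨R, hR⟩ := hc.isCompact.isBounded.subset_closedBall 0
    obtain ⟨S, hS⟩ := hc.exists_bound_of_continuous hB.continuous
    have hz : ∀ (e : E) (t : ℝ) (z : ℝ), z ∉ Set.Icc (-R) R →
        Complex.exp (Complex.I * ((t * z : ℝ) : ℂ)) * B (e, z) = 0 := by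
      intro e t z hzn
      have : B (e, z) = 0 := by
        by_contra hne
        have h1 := hR (subset_tsupport _ (Function.mem_support.2 hne))
        rw [mem_closedBall_zero_iff, Prod.norm_mk] at h1
        have h2 := (le_max_right _ _).trans h1
        rw [Real.norm_eq_abs, abs_le] at h2
        exact hzn h2
      rw [this, mul_zero]
    refine ⟨|S * volume.real (Set.Icc (-R) R)|, abs_nonneg _, fun e t => ?_⟩
    rw [pow_zero, one_mul, ← setIntegral_eq_integral_of_forall_compl_eq_zero (hz e t)]
    refine le_trans (norm_setIntegral_le_of_norm_le_const (C := S) ?_ ?_) (le_abs_self _)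
    · simp
    · intro z _
      rw [norm_mul, mul_comm Complex.I, Complex.norm_exp_ofReal_mul_I, one_mul]
      exact hS _
  | succ M ih =>
    intro B hB hc
    have hB' : ContDiff ℝ (⊤ : ℕ∞) (fun p => fderiv ℝ B p (0, 1)) :=
      (hB.fderiv_right (m := (⊤ : ℕ∞)) (by simp)).clm_apply contDiff_const
    have hc' : HasCompactSupport (fun p => fderiv ℝ B p (0, 1)) := hc.fderiv_apply ℝ (0, 1)
    obtain ⟨C, hC0, hC⟩ := ih _ hB' hc'
    refine ⟨C, hC0, fun e t => ?_⟩
    have slice : ∀ G : E × ℝ → ℂ, Continuous G → HasCompactSupport G →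
        ∀ c : ℂ, Integrable (fun z : ℝ => c * Complex.exp (Complex.I * ((t * z : ℝ) : ℂ)) * G (e, z)) := by
      intro G hG hGc c
      apply Continuous.integrable_of_hasCompactSupport
      · fun_prop
      · obtain ⟨R, hR⟩ := hGc.isCompact.isBounded.subset_closedBall 0
        refine HasCompactSupport.intro (isCompact_closedBall 0 R) fun z hzn => ?_
        have : G (e, z) = 0 := by
          by_contra hne
          have h1 := hR (subset_tsupport _ (Function.mem_support.2 hne))
          rw [mem_closedBall_zero_iff, Prod.norm_mk] at h1
          exact hzn (mem_closedBall_zero_iff.2 ((le_max_right _ _).trans h1))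
        rw [this, mul_zero]
    have key := integral_mul_deriv_eq_deriv_mul_of_integrable
      (u := fun z : ℝ => Complex.exp (Complex.I * ((t * z : ℝ) : ℂ)))
      (u' := fun z : ℝ => (Complex.I * t) * Complex.exp (Complex.I * ((t * z : ℝ) : ℂ)))
      (v := fun z : ℝ => B (e, z)) (v' := fun z : ℝ => fderiv ℝ B (e, z) (0, 1))
      (fun z _ => by
        have h1 : HasDerivAt (fun z : ℝ => ((t * z : ℝ) : ℂ)) (t : ℂ) z := by
          simpa using ((hasDerivAt_id z).const_mul t).ofReal_comp
        have := (h1.const_mul Complex.I).cexp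
        simpa [mul_comm] using this)
      (fun z _ => by
        have h1 : HasDerivAt (fun z : ℝ => (e, z)) ((0 : E), (1 : ℝ)) z :=
          (hasDerivAt_const z e).prodMk (hasDerivAt_id z)
        exact ((hB.differentiable (by simp)) (e, z)).hasFDerivAt.comp_hasDerivAt z h1)
      (by simpa [Pi.mul_def] using slice _ hB'.continuous hc' 1)
      (by simpa [Pi.mul_def] using slice _ hB.continuous hc (Complex.I * t))
      (by simpa [Pi.mul_def] using slice _ hB.continuous hc 1)
    have h2 := hC e t
    rw [key, norm_neg] at h2
    simp only [mul_assoc] at h2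
    rw [integral_const_mul, integral_const_mul, norm_mul, norm_mul, Complex.norm_I, one_mul, Complex.norm_real, Real.norm_eq_abs] at h2
    rw [pow_succ, mul_assoc]
    exact h2

lemma wk_norm (a : ℝ × ℝ → ℝ) (h : ℝ) (hh : 0 < h) (i : ℤ × ℤ) (y z : ℝ) :
    ‖weylKernel h (shiftSymbol a i) y z‖ = (1 / (2 * Real.pi * h)) *
      ‖∫ η : ℝ, Complex.exp (Complex.I * (((y - z) / h * η : ℝ) : ℂ)) *
        ((a ((y + z) / 2 - i.1, η) : ℝ) : ℂ)‖ := by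
  unfold weylKernel shiftSymbol
  rw [norm_mul, Complex.norm_real, Real.norm_of_nonneg (by positivity)]
  congr 1
  rw [← integral_add_right_eq_self _ (i.2 : ℝ)]
  have : ∀ η : ℝ, Complex.exp (Complex.I * (((y - z) * (η + i.2) / h : ℝ) : ℂ)) *
      ((a ((y + z) / 2 - i.1, (η + i.2) - i.2) : ℝ) : ℂ) =
      Complex.exp ((((y - z) * i.2 / h : ℝ) : ℂ) * Complex.I) *
      (Complex.exp (Complex.I * (((y - z) / h * η : ℝ) : ℂ)) *
        ((a ((y + z) / 2 - i.1, η) : ℝ) : ℂ)) := by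
    intro η
    rw [← mul_assoc, ← Complex.exp_add, add_sub_cancel_right]
    congr 2
    push_cast
    ring
  simp only [this]
  rw [integral_const_mul, norm_mul, Complex.norm_exp_ofReal_mul_I, one_mul]

lemma wk_zero (a : ℝ × ℝ → ℝ) (r : ℝ) (hr : ∀ p, a p ≠ 0 → |p.1| ≤ r ∧ |p.2| ≤ r)
    (h : ℝ) (i : ℤ × ℤ) (y z : ℝ) (hyz : weylKernel h (shiftSymbol a i) y z ≠ 0) :
    |(y + z) / 2 - i.1| ≤ r := by
  by_contra hcon
  apply hyz
  unfold weylKernel shiftSymbol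
  have : ∀ η : ℝ, a ((y + z) / 2 - i.1, η - i.2) = 0 := by
    intro η
    by_contra hne
    exact hcon (hr _ hne).1
  simp [this]

lemma wk_meas (a : ℝ × ℝ → ℝ) (ha : Continuous a) (h : ℝ) (i : ℤ × ℤ) :
    StronglyMeasurable (fun p : ℝ × ℝ => weylKernel h (shiftSymbol a i) p.1 p.2) := by
  unfold weylKernel shiftSymbol
  apply StronglyMeasurable.const_mul
  refine StronglyMeasurable.integral_prod_right (f := fun (p : ℝ × ℝ) (η : ℝ) =>
    Complex.exp (Complex.I * (((p.1 - p.2) * η / h : ℝ) : ℂ)) *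
      ((a ((p.1 + p.2) / 2 - i.1, η - i.2) : ℝ) : ℂ)) ?_
  apply Continuous.stronglyMeasurable
  simp only [Function.uncurry_def]
  fun_prop

lemma decay_aux {τ t X C : ℝ} {M : ℕ} (hτ : 0 < τ) (ht : τ ≤ |t|) (hX : 0 ≤ X)
    (h : |t| ^ M * X ≤ C) : X ≤ C / τ ^ M := by
  rw [le_div_iff₀ (by positivity), mul_comm]
  exact (mul_le_mul_of_nonneg_right (pow_le_pow_left₀ hτ.le ht M) hX).trans h

/-- position separation -/
lemma case_one (a : ℝ × ℝ → ℝ) (r : ℝ) (hr : ∀ p, a p ≠ 0 → |p.1| ≤ r ∧ |p.2| ≤ r)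
    (hr2 : r < 1 / 2) (C0 CM : ℝ) (M : ℕ) (hCM : 0 ≤ CM)
    (h0 : ∀ (e : ℝ) (t : ℝ), ‖∫ z : ℝ, Complex.exp (Complex.I * ((t * z : ℝ) : ℂ)) *
      ((a (e, z) : ℝ) : ℂ)‖ ≤ C0)
    (hM : ∀ (e : ℝ) (t : ℝ), |t| ^ M * ‖∫ z : ℝ, Complex.exp (Complex.I * ((t * z : ℝ) : ℂ)) *
      ((a (e, z) : ℝ) : ℂ)‖ ≤ CM)
    (h : ℝ) (hh : 0 < h) (i j : ℤ × ℤ) (hij : 1 ≤ |(i.1 : ℝ) - j.1|) (τ : ℝ) (hτ : 0 < τ)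
    (hτ2 : τ ≤ (1 - 2 * r) * |(i.1 : ℝ) - j.1| / h) (y s : ℝ) :
    ‖∫ z, weylKernel h (shiftSymbol a i) y z * weylKernel h (shiftSymbol a j) z s‖ ≤
      2 * ((1 / (2 * Real.pi * h)) ^ 2 * (C0 * (CM / τ ^ M))) := by
  have hC0 : 0 ≤ C0 := (norm_nonneg _).trans (h0 0 0)
  have hz : ∀ z, z ∉ Set.Icc (2 * (i.1 : ℝ) - y - 1) (2 * (i.1 : ℝ) - y + 1) →
      weylKernel h (shiftSymbol a i) y z * weylKernel h (shiftSymbol a j) z s = 0 := by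
    intro z hzn
    by_contra hne
    have h1 := wk_zero a r hr h i y z (left_ne_zero_of_mul hne)
    rw [abs_le] at h1
    exact hzn ⟨by linarith, by linarith⟩
  rw [← setIntegral_eq_integral_of_forall_compl_eq_zero hz]
  refine le_trans (norm_setIntegral_le_of_norm_le_const
    (C := (1 / (2 * Real.pi * h)) ^ 2 * (C0 * (CM / τ ^ M))) (by simp) ?_) ?_
  · intro z _
    by_cases hne : weylKernel h (shiftSymbol a i) y z * weylKernel h (shiftSymbol a j) z s = 0
    · rw [hne, norm_zero]; positivity
    have h1 := wk_zero a r hr h i y z (left_ne_zero_of_mul hne)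
    have h2 := wk_zero a r hr h j z s (right_ne_zero_of_mul hne)
    rw [norm_mul, wk_norm a h hh, wk_norm a h hh]
    have h3 : 2 * τ ≤ |(y - z) / h| + |(z - s) / h| := by
      have e1 : |(y - z) / h| + |(z - s) / h| = (|y - z| + |z - s|) / h := by
        rw [abs_div, abs_div, abs_of_pos hh]; ring
      rw [e1, le_div_iff₀ hh]
      rw [le_div_iff₀ hh] at hτ2
      have h4 : |y - s| ≤ |y - z| + |z - s| := abs_sub_le _ _ _
      have h5 : |(i.1 : ℝ) - j.1| ≤ |y - s| / 2 + 2 * r := by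
        have e2 : (i.1 : ℝ) - j.1 = (y - s) / 2 + (-((y + z) / 2 - i.1)) + ((z + s) / 2 - j.1) := by
          ring
        have e3 := abs_add_three ((y - s) / 2) (-((y + z) / 2 - (i.1 : ℝ))) ((z + s) / 2 - (j.1 : ℝ))
        rw [← e2, abs_neg, abs_div, abs_two] at e3
        linarith
      have hr0 : 0 ≤ r := (abs_nonneg _).trans h1
      nlinarith
    have h4 := fun (e t : ℝ) (ht : τ ≤ |t|) => decay_aux (X := ‖∫ z : ℝ, Complex.exp (Complex.I * ((t * z : ℝ) : ℂ)) *
      ((a (e, z) : ℝ) : ℂ)‖) (t := t) hτ ht (norm_nonneg _) (hM e t)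
    have key : ∀ X1 X2 : ℝ, 0 ≤ X1 → 0 ≤ X2 → X1 ≤ C0 → X2 ≤ C0 →
        (X1 ≤ CM / τ ^ M ∨ X2 ≤ CM / τ ^ M) →
        (1 / (2 * Real.pi * h)) * X1 * ((1 / (2 * Real.pi * h)) * X2) ≤
        (1 / (2 * Real.pi * h)) ^ 2 * (C0 * (CM / τ ^ M)) := by
      intro X1 X2 p1 p2 q1 q2 hor
      have e1 : (1 / (2 * Real.pi * h)) * X1 * ((1 / (2 * Real.pi * h)) * X2) =
        (1 / (2 * Real.pi * h)) ^ 2 * (X1 * X2) := by ring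
      rw [e1]
      apply mul_le_mul_of_nonneg_left _ (by positivity)
      rcases hor with ho | ho
      · rw [mul_comm]
        exact mul_le_mul q2 ho p1 hC0
      · exact mul_le_mul q1 ho p2 hC0
    apply key _ _ (norm_nonneg _) (norm_nonneg _) (h0 _ _) (h0 _ _)
    rcases le_total τ |(y - z) / h| with h5 | h5
    · exact Or.inl (h4 _ _ h5)
    · exact Or.inr (h4 _ _ (by linarith))
  · rw [Real.volume_real_Icc_of_le (by linarith)]
    apply le_of_eq; ring

def bilB (a : ℝ × ℝ → ℝ) (p : ((ℝ × ℝ) × ℝ) × ℝ) : ℂ :=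
  ((a (p.2, p.1.1.2) * a (p.2 + p.1.1.1, p.1.2) : ℝ) : ℂ)

lemma bilB_smooth (a : ℝ × ℝ → ℝ) (ha : ContDiff ℝ (⊤ : ℕ∞) a) :
    ContDiff ℝ (⊤ : ℕ∞) (bilB a) := by
  unfold bilB
  apply Complex.ofRealCLM.contDiff.comp
  apply ContDiff.mul
  · exact ha.comp (by fun_prop)
  · exact ha.comp (by fun_prop)

lemma bilB_supp (a : ℝ × ℝ → ℝ) (r : ℝ) (hr : ∀ p, a p ≠ 0 → |p.1| ≤ r ∧ |p.2| ≤ r) :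
    HasCompactSupport (bilB a) := by
  refine HasCompactSupport.intro (isCompact_closedBall 0 (2 * r)) fun p hp => ?_
  obtain ⟨⟨⟨q, η⟩, ξ⟩, z⟩ := p
  unfold bilB
  by_contra hne
  have hne' : a (z, η) * a (z + q, ξ) ≠ 0 := by exact_mod_cast hne
  have h1 := hr _ (left_ne_zero_of_mul hne')
  have h2 := hr _ (right_ne_zero_of_mul hne')
  apply hp
  simp only [mem_closedBall_zero_iff, Prod.norm_mk, Real.norm_eq_abs, max_le_iff]
  simp only at h1 h2
  have hr0 : 0 ≤ r := (abs_nonneg _).trans h1.1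
  refine ⟨⟨⟨?_, by linarith⟩, by linarith⟩, by linarith⟩
  have := abs_sub (z + q) z
  rw [add_sub_cancel_left] at this
  linarith

lemma phi_z (a : ℝ × ℝ → ℝ) (h : ℝ) (hh : 0 < h) (i j : ℤ × ℤ) (y s η ξ : ℝ) :
    ‖∫ z : ℝ, (Complex.exp (Complex.I * (((y - z) * η / h : ℝ) : ℂ)) *
        ((a ((y + z) / 2 - i.1, η - i.2) : ℝ) : ℂ)) *
      (Complex.exp (Complex.I * (((z - s) * ξ / h : ℝ) : ℂ)) *
        ((a ((z + s) / 2 - j.1, ξ - j.2) : ℝ) : ℂ))‖ =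
    2 * ‖∫ x : ℝ, Complex.exp (Complex.I * ((2 * (ξ - η) / h * x : ℝ) : ℂ)) *
      bilB a ((((s - y) / 2 + i.1 - j.1, η - i.2), ξ - j.2), x)‖ := by
  set f : ℝ → ℂ := fun z => (Complex.exp (Complex.I * (((y - z) * η / h : ℝ) : ℂ)) *
        ((a ((y + z) / 2 - i.1, η - i.2) : ℝ) : ℂ)) *
      (Complex.exp (Complex.I * (((z - s) * ξ / h : ℝ) : ℂ)) *
        ((a ((z + s) / 2 - j.1, ξ - j.2) : ℝ) : ℂ)) with hf
  have e1 : ∫ x : ℝ, f (2 * (x + (i.1 - y / 2))) = |(2 : ℝ)⁻¹| • ∫ z, f z := by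
    rw [integral_add_right_eq_self (fun x => f (2 * x)), Measure.integral_comp_mul_left]
  have e2 : ∀ x : ℝ, f (2 * (x + (i.1 - y / 2))) =
      Complex.exp (((((2 * i.1 - y) * (ξ - η) + y * η - s * ξ) / h : ℝ) : ℂ) * Complex.I) *
      (Complex.exp (Complex.I * ((2 * (ξ - η) / h * x : ℝ) : ℂ)) *
      bilB a ((((s - y) / 2 + i.1 - j.1, η - i.2), ξ - j.2), x)) := by
    intro x
    simp only [hf, bilB]
    have g1 : (y + 2 * (x + (i.1 - y / 2))) / 2 - i.1 = x := by ring
    have g2 : (2 * (x + (i.1 - y / 2)) + s) / 2 - j.1 = x + ((s - y) / 2 + i.1 - j.1) := by ring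
    have hexp : Complex.exp (Complex.I * (((y - 2 * (x + (i.1 - y / 2))) * η / h : ℝ) : ℂ)) *
        Complex.exp (Complex.I * (((2 * (x + (i.1 - y / 2)) - s) * ξ / h : ℝ) : ℂ)) =
        Complex.exp (((((2 * i.1 - y) * (ξ - η) + y * η - s * ξ) / h : ℝ) : ℂ) * Complex.I) *
        Complex.exp (Complex.I * ((2 * (ξ - η) / h * x : ℝ) : ℂ)) := by
      rw [← Complex.exp_add, ← Complex.exp_add]
      congr 1
      push_cast
      have : (h : ℂ) ≠ 0 := by exact_mod_cast hh.ne'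
      field_simp
      ring
    rw [g1, g2, mul_mul_mul_comm, hexp, Complex.ofReal_mul (a _), mul_assoc]
  simp only [e2] at e1
  rw [integral_const_mul] at e1
  have e3 := congrArg norm e1
  rw [norm_mul, Complex.norm_exp_ofReal_mul_I, one_mul, norm_smul] at e3
  have h2 : ‖|(2 : ℝ)⁻¹|‖ = 1 / 2 := by norm_num
  rw [e3, h2]
  change ‖∫ z, f z‖ = _
  ring

lemma case_two (a : ℝ × ℝ → ℝ) (ha : Continuous a)
    (r : ℝ) (hr : ∀ p, a p ≠ 0 → |p.1| ≤ r ∧ |p.2| ≤ r)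
    (hr2 : r < 1 / 2) (CM : ℝ) (M : ℕ) (hCM : 0 ≤ CM)
    (hM : ∀ (e : (ℝ × ℝ) × ℝ) (t : ℝ), |t| ^ M *
      ‖∫ z : ℝ, Complex.exp (Complex.I * ((t * z : ℝ) : ℂ)) * bilB a (e, z)‖ ≤ CM)
    (h : ℝ) (hh : 0 < h) (i j : ℤ × ℤ) (hij : 1 ≤ |(i.2 : ℝ) - j.2|) (τ : ℝ) (hτ : 0 < τ)
    (hτ2 : τ ≤ (1 - 2 * r) * |(i.2 : ℝ) - j.2| / h) (y s : ℝ) :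
    ‖∫ z, weylKernel h (shiftSymbol a i) y z * weylKernel h (shiftSymbol a j) z s‖ ≤
      2 * ((1 / (2 * Real.pi * h)) ^ 2 * (CM / τ ^ M)) := by
  set Φ : ℝ → ℝ × ℝ → ℂ := fun z p =>
      (Complex.exp (Complex.I * (((y - z) * p.1 / h : ℝ) : ℂ)) *
        ((a ((y + z) / 2 - i.1, p.1 - i.2) : ℝ) : ℂ)) *
      (Complex.exp (Complex.I * (((z - s) * p.2 / h : ℝ) : ℂ)) *
        ((a ((z + s) / 2 - j.1, p.2 - j.2) : ℝ) : ℂ)) with hΦ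
  have hsupp : ∀ z p, Φ z p ≠ 0 → |(y + z) / 2 - i.1| ≤ r ∧ |p.1 - i.2| ≤ r ∧ |p.2 - j.2| ≤ r := by
    intro z p hne
    have g1 := right_ne_zero_of_mul (left_ne_zero_of_mul hne)
    have g2 := right_ne_zero_of_mul (right_ne_zero_of_mul hne)
    have g3 := hr _ (Complex.ofReal_ne_zero.1 g1)
    have g4 := hr _ (Complex.ofReal_ne_zero.1 g2)
    exact ⟨g3.1, g3.2, g4.2⟩
  have hint : Integrable (Function.uncurry Φ) (volume.prod volume) := by
    apply Continuous.integrable_of_hasCompactSupport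
    · simp only [hΦ, Function.uncurry_def]
      fun_prop
    · refine HasCompactSupport.intro ((isCompact_Icc (a := 2 * (i.1 : ℝ) - y - 1)
        (b := 2 * (i.1 : ℝ) - y + 1)).prod ((isCompact_Icc (a := (i.2 : ℝ) - 1 / 2)
        (b := (i.2 : ℝ) + 1 / 2)).prod (isCompact_Icc (a := (j.2 : ℝ) - 1 / 2)
        (b := (j.2 : ℝ) + 1 / 2)))) fun p hp => ?_
      by_contra hne
      obtain ⟨g1, g2, g3⟩ := hsupp p.1 p.2 hne
      rw [abs_le] at g1 g2 g3
      apply hp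
      refine ⟨⟨?_, ?_⟩, ⟨?_, ?_⟩, ⟨?_, ?_⟩⟩ <;> linarith
  have e1 : ∀ z, weylKernel h (shiftSymbol a i) y z * weylKernel h (shiftSymbol a j) z s =
      ((1 / (2 * Real.pi * h) : ℝ) : ℂ) ^ 2 * ∫ p, Φ z p := by
    intro z
    have := integral_prod_mul (μ := (volume : Measure ℝ)) (ν := (volume : Measure ℝ))
      (fun η : ℝ => Complex.exp (Complex.I * (((y - z) * η / h : ℝ) : ℂ)) *
        ((a ((y + z) / 2 - i.1, η - i.2) : ℝ) : ℂ))
      (fun ξ : ℝ => Complex.exp (Complex.I * (((z - s) * ξ / h : ℝ) : ℂ)) *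
        ((a ((z + s) / 2 - j.1, ξ - j.2) : ℝ) : ℂ))
    rw [← Measure.volume_eq_prod] at this
    simp only [hΦ]
    rw [this]
    unfold weylKernel shiftSymbol
    ring
  simp only [e1]
  rw [integral_const_mul, integral_integral_swap hint, norm_mul, norm_pow, Complex.norm_real,
    Real.norm_of_nonneg (by positivity : (0 : ℝ) ≤ 1 / (2 * Real.pi * h))]
  rw [mul_left_comm]
  apply mul_le_mul_of_nonneg_left _ (by positivity)
  have hz : ∀ p, p ∉ (Set.Icc ((i.2 : ℝ) - 1 / 2) ((i.2 : ℝ) + 1 / 2)) ×ˢ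
      (Set.Icc ((j.2 : ℝ) - 1 / 2) ((j.2 : ℝ) + 1 / 2)) → ∫ z, Φ z p = 0 := by
    intro p hp
    have : ∀ z, Φ z p = 0 := by
      intro z
      by_contra hne
      obtain ⟨g1, g2, g3⟩ := hsupp z p hne
      rw [abs_le] at g2 g3
      apply hp
      refine ⟨⟨?_, ?_⟩, ⟨?_, ?_⟩⟩ <;> linarith
    simp [this]
  rw [← setIntegral_eq_integral_of_forall_compl_eq_zero hz]
  have hvol : (volume : Measure (ℝ × ℝ)) ((Set.Icc ((i.2 : ℝ) - 1 / 2) ((i.2 : ℝ) + 1 / 2)) ×ˢ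
      (Set.Icc ((j.2 : ℝ) - 1 / 2) ((j.2 : ℝ) + 1 / 2))) = 1 := by
    rw [Measure.volume_eq_prod, Measure.prod_prod, Real.volume_Icc, Real.volume_Icc]
    ring_nf
    simp
  refine le_trans (norm_setIntegral_le_of_norm_le_const (C := 2 * (CM / τ ^ M)) ?_ ?_) ?_
  · rw [hvol]; simp
  · intro p _
    by_cases hall : ∀ z, Φ z p = 0
    · simp only [hall, integral_zero, norm_zero]; positivity
    push Not at hall
    obtain ⟨z, hne⟩ := hall
    obtain ⟨_, g2, g3⟩ := hsupp z p hne
    simp only [hΦ]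
    rw [phi_z a h hh]
    apply mul_le_mul_of_nonneg_left _ (by norm_num)
    refine decay_aux hτ ?_ (norm_nonneg _) (hM _ _)
    refine hτ2.trans ?_
    rw [abs_div, abs_of_pos hh, abs_mul, abs_two]
    apply div_le_div_of_nonneg_right _ hh.le
    have e2 : (i.2 : ℝ) - j.2 = (-(p.2 - p.1)) + (-(p.1 - i.2)) + (p.2 - j.2) := by ring
    have e3 := abs_add_three (-(p.2 - p.1)) (-(p.1 - (i.2 : ℝ))) (p.2 - (j.2 : ℝ))
    rw [← e2, abs_neg, abs_neg] at e3
    have hr0 : 0 ≤ r := (abs_nonneg _).trans g2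
    nlinarith [abs_nonneg (p.2 - p.1)]
  · rw [measureReal_def, hvol]; simp

lemma cs_aux (g : ℝ → ENNReal) (hg : Measurable g) (S : Set ℝ) :
    (∫⁻ s in S, g s) ^ 2 ≤ volume S * ∫⁻ s in S, g s ^ 2 := by
  have h1 := ENNReal.lintegral_mul_le_Lp_mul_Lq (volume.restrict S) Real.HolderConjugate.two_two
    hg.aemeasurable (aemeasurable_const (b := (1 : ENNReal)))
  simp only [Pi.mul_apply, mul_one, ENNReal.one_rpow, lintegral_const, one_mul,
    Measure.restrict_apply_univ, ENNReal.rpow_two] at h1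
  calc (∫⁻ s in S, g s) ^ 2 ≤ _ := pow_le_pow_left' h1 2
    _ = _ := by
      rw [mul_pow, ← ENNReal.rpow_two, ← ENNReal.rpow_two, ← ENNReal.rpow_mul, ← ENNReal.rpow_mul]
      norm_num [mul_comm]

lemma schur (T : L2R →L[ℂ] L2R) (κ d : ℝ) (hκ : 0 ≤ κ)
    (hT : ∀ u : L2R, ∀ᵐ y : ℝ, ‖(T u : ℝ → ℂ) y‖ₑ ≤
      ENNReal.ofReal κ * ∫⁻ s in Set.Icc (y - d - 2) (y - d + 2), ‖(u : ℝ → ℂ) s‖ₑ) :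
    ‖T‖ ≤ 4 * κ := by
  refine T.opNorm_le_bound (by positivity) fun u => ?_
  have hnorm : ∀ v : L2R, ENNReal.ofReal ‖v‖ ^ 2 = ∫⁻ y, ‖(v : ℝ → ℂ) y‖ₑ ^ 2 := by
    intro v
    rw [Lp.norm_def, ENNReal.ofReal_toReal (Lp.eLpNorm_ne_top v)]
    have := eLpNorm_nnreal_pow_eq_lintegral (f := (v : ℝ → ℂ)) (p := 2) (μ := volume) (by norm_num)
    simpa using this
  have hg : Measurable (fun s => ‖(u : ℝ → ℂ) s‖ₑ) := (Lp.stronglyMeasurable u).measurable.enorm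
  set g : ℝ → ENNReal := fun s => ‖(u : ℝ → ℂ) s‖ₑ with hgdef
  have hset : MeasurableSet {p : ℝ × ℝ | p.2 ∈ Set.Icc (p.1 - d - 2) (p.1 - d + 2)} := by
    apply IsClosed.measurableSet
    simp only [Set.mem_Icc, Set.ofPred_and]
    exact (isClosed_le (by fun_prop) (by fun_prop)).inter (isClosed_le (by fun_prop) (by fun_prop))
  have hswap : ∫⁻ y, ∫⁻ s in Set.Icc (y - d - 2) (y - d + 2), g s ^ 2 = 4 * ∫⁻ s, g s ^ 2 := by
    have e1 : ∀ y : ℝ, ∫⁻ s in Set.Icc (y - d - 2) (y - d + 2), g s ^ 2 =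
        ∫⁻ s, ({p : ℝ × ℝ | p.2 ∈ Set.Icc (p.1 - d - 2) (p.1 - d + 2)}.indicator
          (fun p => g p.2 ^ 2)) (y, s) := by
      intro y
      rw [← lintegral_indicator measurableSet_Icc]
      rfl
    simp only [e1]
    rw [lintegral_lintegral_swap]
    · rw [← lintegral_const_mul _ (by fun_prop)]
      congr 1
      ext s
      have e2 : ∀ y : ℝ, ({p : ℝ × ℝ | p.2 ∈ Set.Icc (p.1 - d - 2) (p.1 - d + 2)}.indicator
          (fun p => g p.2 ^ 2)) (y, s) =
          (Set.Icc (s + d - 2) (s + d + 2)).indicator (fun _ => g s ^ 2) y := by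
        intro y
        simp only [Set.indicator_apply, Set.mem_ofPred_eq, Set.mem_Icc]
        congr 1
        apply propext
        constructor <;> rintro ⟨_, _⟩ <;> constructor <;> linarith
      simp only [e2]
      rw [lintegral_indicator measurableSet_Icc, lintegral_const, Measure.restrict_apply_univ,
        Real.volume_Icc, mul_comm]
      congr 1
      ring_nf
      norm_num
    · apply Measurable.aemeasurable
      exact Measurable.indicator (by fun_prop) hset
  have hfin : ENNReal.ofReal ‖T u‖ ^ 2 ≤ ENNReal.ofReal (4 * κ * ‖u‖) ^ 2 := by
    rw [ENNReal.ofReal_mul (by positivity), mul_pow, hnorm, hnorm]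
    calc ∫⁻ y, ‖(T u : ℝ → ℂ) y‖ₑ ^ 2
        ≤ ∫⁻ y, (ENNReal.ofReal κ ^ 2 * 4) *
            ∫⁻ s in Set.Icc (y - d - 2) (y - d + 2), g s ^ 2 := by
          apply lintegral_mono_ae
          filter_upwards [hT u] with y hy
          refine (pow_le_pow_left' hy 2).trans ?_
          rw [mul_pow, mul_assoc]
          gcongr
          refine (cs_aux g hg _).trans ?_
          rw [Real.volume_Icc]
          gcongr
          ring_nf
          norm_num
      _ = (ENNReal.ofReal κ ^ 2 * 4) * (4 * ∫⁻ s, g s ^ 2) := by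
          rw [lintegral_const_mul' _ _ (by finiteness), hswap]
      _ = _ := by
          rw [ENNReal.ofReal_mul (by norm_num)]
          norm_num
          ring
  rw [← ENNReal.ofReal_pow (norm_nonneg _), ← ENNReal.ofReal_pow (by positivity),
    ENNReal.ofReal_le_ofReal_iff (by positivity)] at hfin
  exact (pow_le_pow_iff_left₀ (norm_nonneg _) (by positivity) two_ne_zero).1 hfin

lemma comp_bound (a : ℝ × ℝ → ℝ) (ha : Continuous a)
    (r : ℝ) (hr : ∀ p, a p ≠ 0 → |p.1| ≤ r ∧ |p.2| ≤ r) (hr2 : r < 1 / 2) (C0 : ℝ)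
    (h0 : ∀ (e : ℝ) (t : ℝ), ‖∫ z : ℝ, Complex.exp (Complex.I * ((t * z : ℝ) : ℂ)) *
      ((a (e, z) : ℝ) : ℂ)‖ ≤ C0)
    (h : ℝ) (hh : 0 < h) (i j : ℤ × ℤ) (κ : ℝ) (hκ : 0 ≤ κ)
    (hK : ∀ y s, ‖∫ z, weylKernel h (shiftSymbol a i) y z *
      weylKernel h (shiftSymbol a j) z s‖ ≤ κ)
    (Ti Tj : L2R →L[ℂ] L2R) (hTi : IsWeylQuant h (shiftSymbol a i) Ti)
    (hTj : IsWeylQuant h (shiftSymbol a j) Tj) :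
    ‖Ti.comp Tj‖ ≤ 4 * κ := by
  apply schur _ κ (2 * ((i.1 : ℝ) - j.1)) hκ
  intro u
  have hbd : ∀ (k : ℤ × ℤ) y z, ‖weylKernel h (shiftSymbol a k) y z‖ ≤
      (1 / (2 * Real.pi * h)) * C0 := by
    intro k y z
    rw [wk_norm a h hh]
    exact mul_le_mul_of_nonneg_left (h0 _ _) (by positivity)
  set D := (1 / (2 * Real.pi * h)) * C0
  have hD : 0 ≤ D := (norm_nonneg _).trans (hbd i 0 0)
  filter_upwards [hTi (Tj u)] with y hy
  have hsm : StronglyMeasurable (u : ℝ → ℂ) := Lp.stronglyMeasurable u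
  set I1 := Set.Icc (2 * (i.1 : ℝ) - y - 1) (2 * (i.1 : ℝ) - y + 1)
  set I2 := Set.Icc (2 * (j.1 : ℝ) - (2 * (i.1 : ℝ) - y) - 2) (2 * (j.1 : ℝ) - (2 * (i.1 : ℝ) - y) + 2)
    with hI2
  have hsupp : ∀ z s, weylKernel h (shiftSymbol a i) y z *
      weylKernel h (shiftSymbol a j) z s ≠ 0 → z ∈ I1 ∧ s ∈ I2 := by
    intro z s hne
    have h1 := wk_zero a r hr h i y z (left_ne_zero_of_mul hne)
    have h2 := wk_zero a r hr h j z s (right_ne_zero_of_mul hne)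
    rw [abs_le] at h1 h2
    exact ⟨⟨by linarith, by linarith⟩, ⟨by linarith, by linarith⟩⟩
  have hint : Integrable (Function.uncurry fun z s => weylKernel h (shiftSymbol a i) y z *
      (weylKernel h (shiftSymbol a j) z s * (u : ℝ → ℂ) s)) (volume.prod volume) := by
    have hu : IntegrableOn (fun s => ‖(u : ℝ → ℂ) s‖) I2 := by
      apply Integrable.norm
      exact ((Lp.memLp u).locallyIntegrable (by norm_num)).integrableOn_isCompact isCompact_Icc
    have h1 : Integrable (I1.indicator (fun _ : ℝ => D * D)) := by
      rw [integrable_indicator_iff measurableSet_Icc]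
      exact integrableOn_const (by simp [I1])
    have h2 : Integrable (I2.indicator (fun s => ‖(u : ℝ → ℂ) s‖)) := by
      rw [integrable_indicator_iff measurableSet_Icc]
      exact hu
    refine Integrable.mono' (h1.mul_prod h2) ?_ ?_
    · apply StronglyMeasurable.aestronglyMeasurable
      apply StronglyMeasurable.mul
      · exact (wk_meas a ha h i).comp_measurable
          (g := fun p : ℝ × ℝ => (y, p.1)) (by fun_prop)
      · exact (wk_meas a ha h j).mul (hsm.comp_measurable measurable_snd)
    · refine Filter.Eventually.of_forall fun p => ?_
      obtain ⟨z, s⟩ := p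
      simp only [Function.uncurry_apply_pair]
      by_cases hne : weylKernel h (shiftSymbol a i) y z * weylKernel h (shiftSymbol a j) z s = 0
      · rw [← mul_assoc, hne, zero_mul, norm_zero]
        apply mul_nonneg
        · exact Set.indicator_nonneg (fun _ _ => by positivity) _
        · exact Set.indicator_nonneg (fun _ _ => by positivity) _
      · obtain ⟨g1, g2⟩ := hsupp z s hne
        rw [Set.indicator_of_mem g1, Set.indicator_of_mem g2, ← mul_assoc, norm_mul, norm_mul]
        exact mul_le_mul_of_nonneg_right (mul_le_mul (hbd _ _ _) (hbd _ _ _) (norm_nonneg _) hD)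
          (norm_nonneg _)
  have e1 : ((Ti.comp Tj) u : ℝ → ℂ) y = ∫ s, (∫ z, weylKernel h (shiftSymbol a i) y z *
      weylKernel h (shiftSymbol a j) z s) * (u : ℝ → ℂ) s := by
    rw [ContinuousLinearMap.comp_apply, hy]
    have e2 : ∫ z, weylKernel h (shiftSymbol a i) y z * (Tj u : ℝ → ℂ) z =
        ∫ z, ∫ s, weylKernel h (shiftSymbol a i) y z *
          (weylKernel h (shiftSymbol a j) z s * (u : ℝ → ℂ) s) := by
      apply integral_congr_ae
      filter_upwards [hTj u] with z hz
      rw [hz, integral_const_mul]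
    rw [e2, integral_integral_swap hint]
    congr 1
    ext s
    rw [← integral_mul_const]
    congr 1
    ext z
    ring
  rw [e1]
  refine (enorm_integral_le_lintegral_enorm _).trans ?_
  have hI : Set.Icc (y - 2 * ((i.1 : ℝ) - j.1) - 2) (y - 2 * ((i.1 : ℝ) - j.1) + 2) = I2 := by
    rw [hI2]; congr 1 <;> ring
  rw [hI, ← lintegral_const_mul' _ _ (by finiteness), ← lintegral_indicator measurableSet_Icc]
  apply lintegral_mono
  intro s
  by_cases hs : s ∈ I2
  · rw [Set.indicator_of_mem hs]
    simp only
    rw [enorm_mul]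
    gcongr
    rw [← ofReal_norm_eq_enorm]
    exact ENNReal.ofReal_le_ofReal (hK y s)
  · have : ∀ z, weylKernel h (shiftSymbol a i) y z * weylKernel h (shiftSymbol a j) z s = 0 := by
      intro z
      by_contra hne
      exact hs (hsupp z s hne).2
    simp [this]

lemma lattice_le {x y : ℝ} (hxy : |y| ≤ |x|) : Real.sqrt (x ^ 2 + y ^ 2) ≤ 2 * |x| := by
  apply Real.sqrt_le_iff.2
  refine ⟨by positivity, ?_⟩
  have := sq_le_sq.2 hxy
  rw [mul_pow, sq_abs]
  nlinarith [sq_nonneg x]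

lemma abs_int_diff {m n : ℤ} (h : m ≠ n) : 1 ≤ |(m : ℝ) - n| := by
  have : (1 : ℤ) ≤ |m - n| := Int.one_le_abs (sub_ne_zero.2 h)
  exact_mod_cast this

lemma nat_version (a₀ : ℝ × ℝ → ℝ)
    (ha_smooth : ContDiff ℝ (⊤ : ℕ∞) a₀) (ha_supp : HasCompactSupport a₀)
    (ha_supp' : tsupport a₀ ⊆
      Set.Ioo (-(1/2) : ℝ) (1/2) ×ˢ Set.Ioo (-(1/2) : ℝ) (1/2)) (M : ℕ) :
    ∃ C : ℝ, 0 ≤ C ∧ ∀ h : ℝ, 0 < h → h < 1 → ∀ i j : ℤ × ℤ, i ≠ j →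
          1 ≤ latticeNorm (i - j) ∧ ∀ Ti Tj : L2R →L[ℂ] L2R,
            IsWeylQuant h (shiftSymbol a₀ i) Ti →
            IsWeylQuant h (shiftSymbol a₀ j) Tj →
            ‖Ti.comp Tj‖ ≤ C * ((1 / h) ^ 2 * (h / latticeNorm (i - j)) ^ M) := by
  have hball : tsupport a₀ ⊆ Metric.ball 0 (1 / 2) := by
    intro p hp
    obtain ⟨⟨h1, h2⟩, ⟨h3, h4⟩⟩ := ha_supp' hp
    rw [mem_ball_zero_iff, Prod.norm_def, Real.norm_eq_abs, Real.norm_eq_abs, max_lt_iff, abs_lt,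
      abs_lt]
    exact ⟨⟨h1, h2⟩, ⟨h3, h4⟩⟩
  obtain ⟨r, hr2, hr'⟩ := exists_lt_subset_ball (isClosed_tsupport a₀) hball
  have hr : ∀ p, a₀ p ≠ 0 → |p.1| ≤ r ∧ |p.2| ≤ r := by
    intro p hp
    have h1 := hr' (subset_tsupport _ (Function.mem_support.2 hp))
    rw [mem_ball_zero_iff, Prod.norm_def, Real.norm_eq_abs, Real.norm_eq_abs, max_lt_iff] at h1
    exact ⟨h1.1.le, h1.2.le⟩
  have hs1 : ContDiff ℝ (⊤ : ℕ∞) (fun p : ℝ × ℝ => ((a₀ p : ℝ) : ℂ)) :=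
    Complex.ofRealCLM.contDiff.comp ha_smooth
  have hc1 : HasCompactSupport (fun p : ℝ × ℝ => ((a₀ p : ℝ) : ℂ)) :=
    ha_supp.comp_left (g := fun x : ℝ => (x : ℂ)) (by simp)
  obtain ⟨C0, hC0, h0⟩ := osc 0 _ hs1 hc1
  obtain ⟨C1, hC1, h1⟩ := osc M _ hs1 hc1
  obtain ⟨C2, hC2, h2⟩ := osc M _ (bilB_smooth a₀ ha_smooth) (bilB_supp a₀ r hr)
  simp only [pow_zero, one_mul] at h0
  set δ := 1 - 2 * r with hδ
  have hδ0 : 0 < δ := by linarith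
  set c := 8 * (1 / (2 * Real.pi)) ^ 2 * (C0 * C1 + C2) * (2 / δ) ^ M with hc
  refine ⟨c, by positivity, ?_⟩
  intro h hh _ i j hij
  have hL : latticeNorm (i - j) = Real.sqrt (((i.1 : ℝ) - j.1) ^ 2 + ((i.2 : ℝ) - j.2) ^ 2) := by
    simp [latticeNorm]
  set L := latticeNorm (i - j)
  have hL1 : 1 ≤ L := by
    rw [hL]
    apply Real.one_le_sqrt.2
    rcases eq_or_ne i.1 j.1 with e | e
    · have e' : i.2 ≠ j.2 := fun e2 => hij (Prod.ext e e2)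
      have := abs_int_diff e'
      nlinarith [sq_abs ((i.2 : ℝ) - j.2), sq_nonneg ((i.1 : ℝ) - j.1)]
    · have := abs_int_diff e
      nlinarith [sq_abs ((i.1 : ℝ) - j.1), sq_nonneg ((i.2 : ℝ) - j.2)]
  refine ⟨hL1, fun Ti Tj hTi hTj => ?_⟩
  have hL0 : 0 < L := by linarith
  set τ := δ * (L / 2) / h with hτ
  have hτ0 : 0 < τ := by positivity
  have hτM : 1 / τ ^ M = (2 / δ) ^ M * (h / L) ^ M := by
    rw [hτ, ← mul_pow, ← one_div_pow]
    congr 1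
    field_simp
  have hK : ∀ y s, ‖∫ z, weylKernel h (shiftSymbol a₀ i) y z *
      weylKernel h (shiftSymbol a₀ j) z s‖ ≤
      2 * ((1 / (2 * Real.pi * h)) ^ 2 * ((C0 * C1 + C2) / τ ^ M)) := by
    intro y s
    rcases le_total |(i.2 : ℝ) - j.2| |(i.1 : ℝ) - j.1| with hle | hle
    · have hb := lattice_le hle
      rw [← hL] at hb
      have hne : i.1 ≠ j.1 := by
        intro e
        rw [e, sub_self, abs_zero] at hb
        linarith
      refine (case_one a₀ r hr hr2 C0 C1 M hC1 h0 h1 h hh i j (abs_int_diff hne) τ hτ0 ?_ y s).trans ?_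
      · rw [hτ]
        gcongr
        linarith
      · rw [← mul_div_assoc]
        gcongr
        linarith
    · have hb := lattice_le hle
      rw [add_comm, ← hL] at hb
      have hne : i.2 ≠ j.2 := by
        intro e
        rw [e, sub_self, abs_zero] at hb
        linarith
      refine (case_two a₀ ha_smooth.continuous r hr hr2 C2 M hC2 h2 h hh i j (abs_int_diff hne) τ hτ0 ?_ y s).trans ?_
      · rw [hτ]
        gcongr
        linarith
      · gcongr
        nlinarith
  refine (comp_bound a₀ ha_smooth.continuous r hr hr2 C0 h0 h hh i j _ (by positivity) hK
    Ti Tj hTi hTj).trans (le_of_eq ?_)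
  rw [div_eq_mul_one_div (C0 * C1 + C2), hτM, hc]
  field_simp
  ring

theorem weyl_disjoint_sites_composition_bound
    (a₀ : ℝ × ℝ → ℝ)
    (ha_smooth : ContDiff ℝ (⊤ : ℕ∞) a₀) (ha_supp : HasCompactSupport a₀)
    (ha_supp' : tsupport a₀ ⊆
      Set.Ioo (-(1/2) : ℝ) (1/2) ×ˢ Set.Ioo (-(1/2) : ℝ) (1/2)) :
    ∀ N : ℝ, 0 < N → ∃ C : ℝ, 0 < C ∧
      ∀ h : ℝ, 0 < h → h < 1 →
        ∀ i j : ℤ × ℤ, i ≠ j →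
          ∀ Ti Tj : L2R →L[ℂ] L2R,
            IsWeylQuant h (shiftSymbol a₀ i) Ti →
            IsWeylQuant h (shiftSymbol a₀ j) Tj →
            ‖Ti.comp Tj‖ ≤ C * h ^ N * (latticeNorm (i - j)) ^ (-N) := by
  intro N hN
  obtain ⟨n, hn⟩ := exists_nat_ge N
  obtain ⟨C, hC0, hC⟩ := nat_version a₀ ha_smooth ha_supp ha_supp' (n + 2)
  refine ⟨C + 1, by linarith, ?_⟩
  intro h hh hh1 i j hij Ti Tj hTi hTj
  obtain ⟨hL, hb⟩ := hC h hh hh1 i j hij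
  refine (hb Ti Tj hTi hTj).trans ?_
  set L := latticeNorm (i - j)
  have hL0 : 0 < L := by linarith
  have e1 : (1 / h) ^ 2 * (h / L) ^ (n + 2) ≤ (h / L) ^ N := by
    have e2 : (1 / h) ^ 2 * (h / L) ^ (n + 2) = (h / L) ^ n * (1 / L) ^ 2 := by
      rw [pow_add]
      field_simp
    rw [e2]
    have e3 : (1 / L) ^ 2 ≤ 1 := by
      apply pow_le_one₀ (by positivity)
      rw [div_le_one hL0]; exact hL
    have e4 : (h / L) ^ n ≤ (h / L) ^ N := by
      rw [← Real.rpow_natCast]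
      apply Real.rpow_le_rpow_of_exponent_ge (by positivity) _ hn
      rw [div_le_one hL0]; linarith
    calc (h / L) ^ n * (1 / L) ^ 2 ≤ (h / L) ^ n * 1 := by gcongr
      _ ≤ _ := by rw [mul_one]; exact e4
  have e5 : (h / L) ^ N = h ^ N * L ^ (-N) := by
    rw [Real.div_rpow hh.le hL0.le, Real.rpow_neg hL0.le, div_eq_mul_inv]
  rw [mul_assoc, ← e5]
  have : 0 ≤ (h / L) ^ N := by positivity
  calc C * _ ≤ C * (h / L) ^ N := by gcongr
    _ ≤ _ := by gcongr; linarith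
end
end

section
/- Let a₀ ∈ C_c^∞(ℝ²) be real-valued with supp a₀ ⊂ (−1/2, 1/2)², and let χ₀ ∈ C_c^∞(ℝ²) satisfy supp χ₀ ⊂ (−1/2, 1/2)² and χ₀ = 1 on an open neighborhood of supp a₀. For j ∈ ℤ² let a_j and χ_j be the translates of a₀ and χ₀ by j, let P_j := χ̂_j, and for a finite set Λ̃ ⊂ ℤ² let A := Σ_{j ∈ Λ̃} â_j and Q := I − Σ_{j ∈ Λ̃} P_j. Then for every N > 0 there exists C_N > 0, depending only on a₀, χ₀ and N but not on Λ̃, such that for all h ∈ (0,1) and all j ∈ Λ̃: ‖P_j ∘ A − â_j‖ ≤ C_N h^N and ‖Q ∘ A‖ ≤ C_N h^N (operator norms on L²(ℝ)). -/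
/-!
STATEMENT 3: With a₀, χ₀ ∈ C_c^∞(ℝ²) supported in (−1/2,1/2)², χ₀ ≡ 1 on an
open neighborhood of supp a₀, translates a_j, χ_j, quantizations
P_j := χ̂_j, A := Σ_{j∈Λ̃} â_j and Q := I − Σ_{j∈Λ̃} P_j: for every N > 0
there is C_N > 0, depending only on a₀, χ₀, N (not on Λ̃), such that for all
h ∈ (0,1) and j ∈ Λ̃, ‖P_j ∘ A − â_j‖ ≤ C_N h^N and ‖Q ∘ A‖ ≤ C_N h^N.
-/

open MeasureTheory Complex Real

noncomputable section

namespace WL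

structure CS (b : ℝ × ℝ → ℂ) : Prop where
  smooth : ContDiff ℝ (⊤ : ℕ∞) b
  cpt : HasCompactSupport b

def dx (b : ℝ × ℝ → ℂ) : ℝ × ℝ → ℂ := fun p => fderiv ℝ b p (1, 0)
def dk (b : ℝ × ℝ → ℂ) : ℝ × ℝ → ℂ := fun p => fderiv ℝ b p (0, 1)
/-- symbol of `∂_t` -/
def mt (b : ℝ × ℝ → ℂ) : ℝ × ℝ → ℂ := fun p => (2 * Real.pi * Complex.I * (p.2 : ℂ)) * b p
/-- symbol of `t/2` -/
def dd (b : ℝ × ℝ → ℂ) : ℝ × ℝ → ℂ := fun p => (-(1 / (4 * Real.pi * Complex.I))) * dk b p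
def sh (b : ℝ × ℝ → ℂ) (j : ℤ × ℤ) : ℝ × ℝ → ℂ :=
  fun p => b (p.1 - (j.1 : ℝ), p.2 - (j.2 : ℝ))

def F (b : ℝ × ℝ → ℂ) (x t : ℝ) : ℂ :=
  ∫ η : ℝ, Complex.exp (2 * Real.pi * Complex.I * (t : ℂ) * (η : ℂ)) * b (x, η)

lemma CS.cont {b} (hb : CS b) : Continuous b := hb.smooth.continuous

lemma CS.dx {b} (hb : CS b) : CS (dx b) :=
  ⟨(hb.smooth.fderiv_right (m := (⊤ : ℕ∞)) (by simp)).clm_apply contDiff_const,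
    hb.cpt.fderiv_apply ℝ _⟩

lemma CS.dk {b} (hb : CS b) : CS (dk b) :=
  ⟨(hb.smooth.fderiv_right (m := (⊤ : ℕ∞)) (by simp)).clm_apply contDiff_const,
    hb.cpt.fderiv_apply ℝ _⟩

lemma CS.mt {b} (hb : CS b) : CS (mt b) := by
  refine ⟨?_, hb.cpt.mul_left⟩
  refine ContDiff.mul (contDiff_const.mul ?_) hb.smooth
  exact Complex.ofRealCLM.contDiff.comp contDiff_snd

lemma CS.dd {b} (hb : CS b) : CS (dd b) :=
  ⟨contDiff_const.mul hb.dk.smooth, hb.dk.cpt.mul_left⟩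

lemma CS.sh {b} (hb : CS b) (j) : CS (sh b j) := by
  refine ⟨hb.smooth.comp ((contDiff_fst.sub contDiff_const).prodMk
    (contDiff_snd.sub contDiff_const)), ?_⟩
  have := hb.cpt.comp_homeomorph (Homeomorph.subRight ((j.1 : ℝ), (j.2 : ℝ)))
  exact this

lemma sh_fderiv (b : ℝ × ℝ → ℂ) (j : ℤ × ℤ) (p) :
    fderiv ℝ (sh b j) p = fderiv ℝ b (p.1 - (j.1 : ℝ), p.2 - (j.2 : ℝ)) := by
  have := fderiv_comp_sub (𝕜 := ℝ) (f := b) (x := p) ((j.1 : ℝ), (j.2 : ℝ))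
  exact this

lemma dx_sh (b j) : dx (sh b j) = sh (dx b) j := by
  funext p; simp only [dx, sh_fderiv]; rfl
lemma dk_sh (b j) : dk (sh b j) = sh (dk b) j := by
  funext p; simp only [dk, sh_fderiv]; rfl
lemma dd_sh (b j) : dd (sh b j) = sh (dd b) j := by
  funext p; simp only [dd, dk_sh]; rfl
lemma mt_sh (b) (j : ℤ × ℤ) (p) : mt (sh b j) p =
    sh (mt b) j p + (2 * Real.pi * Complex.I * (j.2 : ℂ)) * sh b j p := by
  simp only [mt, sh]; push_cast; ring

lemma CS.radius {b} (hb : CS b) : ∃ R : ℝ, 0 < R ∧ ∀ x η, R < |x| ∨ R < |η| → b (x, η) = 0 := by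
  obtain ⟨R, hR⟩ := hb.cpt.isCompact.isBounded.subset_closedBall 0
  refine ⟨max R 1, by positivity, fun x η h => ?_⟩
  by_contra hne
  have := hR (subset_tsupport _ hne)
  rw [mem_closedBall_zero_iff, Prod.norm_def] at this
  have h1 : |x| ≤ R := (le_max_left _ _).trans this
  have h2 : |η| ≤ R := (le_max_right _ _).trans this
  have := le_max_left R 1
  rcases h with h | h <;> linarith

lemma CS.bound {b} (hb : CS b) : ∃ C : ℝ, 0 ≤ C ∧ ∀ p, ‖b p‖ ≤ C := by
  obtain ⟨C, hC⟩ := hb.cont.bounded_above_of_compact_support hb.cpt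
  exact ⟨C, (norm_nonneg _).trans (hC 0), hC⟩

/-- dominating function -/
lemma CS.dom {b} (hb : CS b) : ∃ C R : ℝ, 0 ≤ C ∧ 0 < R ∧ ∀ x η, ‖b (x, η)‖ ≤
    (Set.Icc (-R) R).indicator (fun _ => C) η := by
  obtain ⟨C, hC0, hC⟩ := hb.bound
  obtain ⟨R, hR0, hR⟩ := hb.radius
  refine ⟨C, R, hC0, hR0, fun x η => ?_⟩
  by_cases h : η ∈ Set.Icc (-R) R
  · rw [Set.indicator_of_mem h]; exact hC _
  · rw [Set.indicator_of_notMem h, hR x η, norm_zero]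
    right
    by_contra h'
    exact h (abs_le.mp (not_lt.mp h'))

lemma int_ind (C R : ℝ) : Integrable ((Set.Icc (-R) R).indicator (fun _ : ℝ => C)) :=
  (integrable_indicator_iff measurableSet_Icc).2 (by simp)

lemma norm_exp (t η : ℝ) : ‖Complex.exp (2 * Real.pi * Complex.I * (t : ℂ) * (η : ℂ))‖ = 1 := by
  have : (2 * Real.pi * Complex.I * (t : ℂ) * (η : ℂ)) = ((2 * Real.pi * t * η : ℝ) : ℂ) * Complex.I := by
    push_cast; ring
  rw [this, Complex.norm_exp_ofReal_mul_I]

lemma F_cont {b} (hb : CS b) : Continuous (fun p : ℝ × ℝ => F b p.1 p.2) := by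
  obtain ⟨C, R, hC, hR, h⟩ := hb.dom
  have hbc := hb.cont
  refine continuous_of_dominated (bound := (Set.Icc (-R) R).indicator (fun _ => C)) ?_ ?_ (int_ind C R) ?_
  · intro p; apply Continuous.aestronglyMeasurable; fun_prop
  · intro p; refine Filter.Eventually.of_forall fun η => ?_
    rw [norm_mul, norm_exp, one_mul]; exact h _ _
  · refine Filter.Eventually.of_forall fun η => ?_
    fun_prop

lemma F_int {b} (hb : CS b) (x t : ℝ) : Integrable (fun η : ℝ =>
    Complex.exp (2 * Real.pi * Complex.I * (t : ℂ) * (η : ℂ)) * b (x, η)) := by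
  obtain ⟨C, R, hC, hR, h⟩ := hb.dom
  have hbc := hb.cont
  refine (int_ind C R).mono' ?_ ?_
  · apply Continuous.aestronglyMeasurable; fun_prop
  · refine Filter.Eventually.of_forall fun η => ?_
    rw [norm_mul, norm_exp, one_mul]; exact h _ _

lemma F_add {b c} (hb : CS b) (hc : CS c) (x t : ℝ) :
    F (fun p => b p + c p) x t = F b x t + F c x t := by
  simp only [F, mul_add]; exact integral_add (F_int hb x t) (F_int hc x t)

lemma F_smul (z : ℂ) (b) (x t : ℝ) : F (fun p => z * b p) x t = z * F b x t := by
  simp only [F]; rw [← integral_const_mul]; congr 1; funext η; ring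

lemma F_line {b} (hb : CS b) (x₀ t₀ α β s : ℝ) :
    HasDerivAt (fun s : ℝ => F b (x₀ + α * s) (t₀ + β * s))
      ((α : ℂ) * F (dx b) (x₀ + α * s) (t₀ + β * s) + (β : ℂ) * F (mt b) (x₀ + α * s) (t₀ + β * s)) s := by
  obtain ⟨C, R, hC, hR, h⟩ := hb.dx.dom
  obtain ⟨C', R', hC', hR', h'⟩ := hb.mt.dom
  have hbc := hb.cont
  have hbc1 := hb.dx.cont
  have hbc2 := hb.mt.cont
  have key := hasDerivAt_integral_of_dominated_loc_of_deriv_le (μ := (volume : Measure ℝ)) (𝕜 := ℝ)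
    (bound := fun η => |α| * (Set.Icc (-R) R).indicator (fun _ => C) η
      + |β| * (Set.Icc (-R') R').indicator (fun _ => C') η)
    (F := fun (s : ℝ) (η : ℝ) => Complex.exp (2 * Real.pi * Complex.I * ((t₀ + β * s : ℝ) : ℂ) * (η : ℂ)) * b (x₀ + α * s, η))
    (F' := fun (s : ℝ) (η : ℝ) => (α : ℂ) * (Complex.exp (2 * Real.pi * Complex.I * ((t₀ + β * s : ℝ) : ℂ) * (η : ℂ)) * dx b (x₀ + α * s, η))
      + (β : ℂ) * (Complex.exp (2 * Real.pi * Complex.I * ((t₀ + β * s : ℝ) : ℂ) * (η : ℂ)) * mt b (x₀ + α * s, η)))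
    (x₀ := s) (s := Set.univ) Filter.univ_mem ?_ ?_ ?_ ?_ ?_ ?_
  · have h2 := key.2
    rw [integral_add ((F_int hb.dx _ _).const_mul _) ((F_int hb.mt _ _).const_mul _),
      integral_const_mul, integral_const_mul] at h2
    exact h2
  · refine Filter.Eventually.of_forall fun s => ?_
    apply Continuous.aestronglyMeasurable; fun_prop
  · exact F_int hb _ _
  · apply Continuous.aestronglyMeasurable; fun_prop
  · refine Filter.Eventually.of_forall fun η s _ => ?_
    refine (norm_add_le _ _).trans ?_
    simp only [norm_mul, norm_exp, one_mul, Complex.norm_real, Real.norm_eq_abs]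
    gcongr
    · exact h _ _
    · exact h' _ _
  · exact ((int_ind C R).const_mul _).add ((int_ind C' R').const_mul _)
  · refine Filter.Eventually.of_forall fun η s _ => ?_
    have e1 : HasDerivAt (fun s : ℝ => b (x₀ + α * s, η)) ((α : ℂ) * dx b (x₀ + α * s, η)) s := by
      have hd : HasFDerivAt b (fderiv ℝ b (x₀ + α * s, η)) (x₀ + α * s, η) :=
        (hb.smooth.differentiable (by simp) _).hasFDerivAt
      have hc : HasDerivAt (fun s : ℝ => ((x₀ + α * s, η) : ℝ × ℝ)) (α, 0) s := by
        have : HasDerivAt (fun s : ℝ => x₀ + α * s) α s := by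
          simpa using ((hasDerivAt_id s).const_mul α).const_add x₀
        exact this.prodMk (hasDerivAt_const s η)
      have := hd.comp_hasDerivAt s hc
      have e : ((α, 0) : ℝ × ℝ) = α • ((1 : ℝ), (0 : ℝ)) := by simp
      rw [e, map_smul] at this
      rw [Complex.real_smul] at this
      exact this
    have e2 : HasDerivAt (fun s : ℝ => Complex.exp (2 * Real.pi * Complex.I * ((t₀ + β * s : ℝ) : ℂ) * (η : ℂ)))
        (Complex.exp (2 * Real.pi * Complex.I * ((t₀ + β * s : ℝ) : ℂ) * (η : ℂ)) * (2 * Real.pi * Complex.I * (β : ℂ) * (η : ℂ))) s := by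
      apply HasDerivAt.cexp
      apply HasDerivAt.mul_const
      apply HasDerivAt.const_mul
      have : HasDerivAt (fun s : ℝ => t₀ + β * s) β s := by
        simpa using ((hasDerivAt_id s).const_mul β).const_add t₀
      exact this.ofReal_comp
    refine HasDerivAt.congr_deriv (e2.mul e1) ?_
    simp only [mt]; ring

lemma F_ibp {b} (hb : CS b) (x t : ℝ) :
    (2 * Real.pi * Complex.I * (t : ℂ)) * F b x t = - F (dk b) x t := by
  have := integral_eq_zero_of_hasDerivAt_of_integrable
    (f := fun η : ℝ => Complex.exp (2 * Real.pi * Complex.I * (t : ℂ) * (η : ℂ)) * b (x, η))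
    (f' := fun η : ℝ => (2 * Real.pi * Complex.I * (t : ℂ)) * (Complex.exp (2 * Real.pi * Complex.I * (t : ℂ) * (η : ℂ)) * b (x, η))
      + Complex.exp (2 * Real.pi * Complex.I * (t : ℂ) * (η : ℂ)) * dk b (x, η)) ?_ ?_ (F_int hb x t)
  · rw [integral_add ((F_int hb _ _).const_mul _) (F_int hb.dk _ _), integral_const_mul] at this
    exact eq_neg_of_add_eq_zero_left this
  · intro η
    have e1 : HasDerivAt (fun η : ℝ => b (x, η)) (dk b (x, η)) η := by
      have hd : HasFDerivAt b (fderiv ℝ b (x, η)) (x, η) :=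
        (hb.smooth.differentiable (by simp) _).hasFDerivAt
      have hc : HasDerivAt (fun s : ℝ => ((x, s) : ℝ × ℝ)) (0, 1) η :=
        (hasDerivAt_const η x).prodMk (hasDerivAt_id η)
      exact hd.comp_hasDerivAt η hc
    have e2 : HasDerivAt (fun η : ℝ => Complex.exp (2 * Real.pi * Complex.I * (t : ℂ) * (η : ℂ)))
        (Complex.exp (2 * Real.pi * Complex.I * (t : ℂ) * (η : ℂ)) * (2 * Real.pi * Complex.I * (t : ℂ) * 1)) η := by
      apply HasDerivAt.cexp
      apply HasDerivAt.const_mul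
      exact (hasDerivAt_id η).ofReal_comp
    refine HasDerivAt.congr_deriv (e2.mul e1) ?_
    ring
  · exact ((F_int hb _ _).const_mul _).add (F_int hb.dk _ _)

lemma F_dd {b} (hb : CS b) (x t : ℝ) : F (dd b) x t = ((t / 2 : ℝ) : ℂ) * F b x t := by
  have h := F_ibp hb x t
  have : F (dd b) x t = (-(1 / (4 * Real.pi * Complex.I))) * F (dk b) x t := F_smul _ _ _ _
  rw [this]
  have hp : (Real.pi : ℂ) ≠ 0 := by exact_mod_cast Real.pi_ne_zero
  have hI := Complex.I_ne_zero
  have h2 : F (dk b) x t = -((2 * Real.pi * Complex.I * (t : ℂ)) * F b x t) := by rw [h]; ring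
  rw [h2]; push_cast; field_simp; ring

lemma F_sh (b) (j : ℤ × ℤ) (x t : ℝ) : F (sh b j) x t =
    Complex.exp (2 * Real.pi * Complex.I * (t : ℂ) * ((j.2 : ℝ) : ℂ)) * F b (x - j.1) t := by
  simp only [F, sh]
  rw [← integral_const_mul]
  refine Eq.trans ?_ (integral_sub_right_eq_self _ (j.2 : ℝ))
  congr 1; funext η
  rw [← mul_assoc, ← Complex.exp_add]
  congr 2
  push_cast; ring

lemma F_sh_norm (b) (j : ℤ × ℤ) (x t : ℝ) : ‖F (sh b j) x t‖ = ‖F b (x - j.1) t‖ := by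
  rw [F_sh, norm_mul, norm_exp, one_mul]

lemma F_bdd {b} (hb : CS b) : ∃ C : ℝ, 0 ≤ C ∧ ∀ x t, ‖F b x t‖ ≤ C := by
  obtain ⟨C, R, hC, hR, h⟩ := hb.dom
  refine ⟨∫ η, (Set.Icc (-R) R).indicator (fun _ => C) η, ?_, fun x t => ?_⟩
  · exact integral_nonneg (Set.indicator_nonneg fun _ _ => hC)
  · refine norm_integral_le_of_norm_le (int_ind C R) (Filter.Eventually.of_forall fun η => ?_)
    rw [norm_mul, norm_exp, one_mul]; exact h _ _

lemma F_decay (p : ℕ) : ∀ {b}, CS b → ∃ C : ℝ, 0 ≤ C ∧ ∀ x t : ℝ, (1 + t ^ 2) ^ p * ‖F b x t‖ ≤ C := by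
  induction p with
  | zero => intro b hb; simpa using F_bdd hb
  | succ p ih =>
    intro b hb
    obtain ⟨C, hC, h⟩ := ih hb
    obtain ⟨C', hC', h'⟩ := ih hb.dd.dd
    refine ⟨C + 4 * C', by positivity, fun x t => ?_⟩
    have h1 := h x t
    have h2 := h' x t
    rw [F_dd hb.dd, F_dd hb, norm_mul, norm_mul, Complex.norm_real, Real.norm_eq_abs] at h2
    have : |t / 2| * (|t / 2| * ‖F b x t‖) = t ^ 2 / 4 * ‖F b x t‖ := by
      rw [← mul_assoc, abs_mul_abs_self]; ring
    rw [this] at h2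
    calc _ = (1 + t ^ 2) ^ p * ‖F b x t‖ + 4 * ((1 + t ^ 2) ^ p * (t ^ 2 / 4 * ‖F b x t‖)) := by ring
      _ ≤ _ := by linarith

end WL

namespace WL

def Bi (b c : ℝ × ℝ → ℂ) (H x t s : ℝ) : ℂ :=
  F b (x + H * s / 2) (t - s) * F c (x - H * (t - s) / 2) s

def B (b c : ℝ × ℝ → ℂ) (H x t : ℝ) : ℂ := ∫ s, Bi b c H x t s

lemma peetre (t s : ℝ) : 1 + t ^ 2 ≤ 2 * (1 + (t - s) ^ 2) * (1 + s ^ 2) := by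
  nlinarith [sq_nonneg (t - 2 * s), sq_nonneg ((t-s)*s)]

lemma Bi_dom {b c} (hb : CS b) (hc : CS c) (p : ℕ) : ∃ C : ℝ, 0 ≤ C ∧ ∀ j k H x t s,
    (1 + t ^ 2) ^ p * ‖Bi (sh b j) (sh c k) H x t s‖ ≤ C * (1 + s ^ 2)⁻¹ := by
  obtain ⟨C, hC, h⟩ := F_decay p hb
  obtain ⟨C', hC', h'⟩ := F_decay (p + 1) hc
  refine ⟨2 ^ p * C * C', by positivity, fun j k H x t s => ?_⟩
  rw [Bi, norm_mul, F_sh_norm, F_sh_norm]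
  set X := x + H * s / 2 - j.1
  set Y := x - H * (t - s) / 2 - k.1
  have h1 := h X (t - s)
  have h2 := h' Y s
  have h3 : (1 + t ^ 2) ^ p ≤ 2 ^ p * (1 + (t - s) ^ 2) ^ p * (1 + s ^ 2) ^ p := by
    rw [← mul_pow, ← mul_pow]; gcongr; exact peetre t s
  rw [← div_eq_mul_inv, le_div_iff₀ (by positivity)]
  calc (1 + t ^ 2) ^ p * (‖F b X (t - s)‖ * ‖F c Y s‖) * (1 + s ^ 2)
      ≤ (2 ^ p * (1 + (t - s) ^ 2) ^ p * (1 + s ^ 2) ^ p) * (‖F b X (t - s)‖ * ‖F c Y s‖) * (1 + s ^ 2) := by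
        gcongr
    _ = 2 ^ p * ((1 + (t - s) ^ 2) ^ p * ‖F b X (t - s)‖) * ((1 + s ^ 2) ^ (p+1) * ‖F c Y s‖) := by ring
    _ ≤ 2 ^ p * C * C' := by gcongr

lemma sh_zero (b) : sh b 0 = b := by funext p; simp [sh]

lemma Bi_dom0 {b c} (hb : CS b) (hc : CS c) : ∃ C : ℝ, 0 ≤ C ∧ ∀ H x t s,
    ‖Bi b c H x t s‖ ≤ C * (1 + s ^ 2)⁻¹ := by
  obtain ⟨C, hC, h⟩ := Bi_dom hb hc 0
  refine ⟨C, hC, fun H x t s => ?_⟩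
  simpa [sh_zero] using h 0 0 H x t s

lemma Bi_cont {b c} (hb : CS b) (hc : CS c) (H x t : ℝ) : Continuous (Bi b c H x t) := by
  have h1 := F_cont hb
  have h2 := F_cont hc
  have e1 : Continuous (fun s : ℝ => (x + H * s / 2, t - s)) := by fun_prop
  have e2 : Continuous (fun s : ℝ => (x - H * (t - s) / 2, s)) := by fun_prop
  exact (h1.comp e1).mul (h2.comp e2)

lemma Bi_int {b c} (hb : CS b) (hc : CS c) (H x t : ℝ) : Integrable (Bi b c H x t) := by
  obtain ⟨C, hC, h⟩ := Bi_dom0 hb hc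
  exact (integrable_inv_one_add_sq.const_mul C).mono' (Bi_cont hb hc H x t).aestronglyMeasurable
    (Filter.Eventually.of_forall fun s => h H x t s)

lemma B_dom {b c} (hb : CS b) (hc : CS c) (p : ℕ) : ∃ C : ℝ, 0 ≤ C ∧ ∀ j k H x t,
    (1 + t ^ 2) ^ p * ‖B (sh b j) (sh c k) H x t‖ ≤ C := by
  obtain ⟨C, hC, h⟩ := Bi_dom hb hc p
  refine ⟨C * Real.pi, by positivity, fun j k H x t => ?_⟩
  have h0 : 0 < (1 + t ^ 2) ^ p := by positivity
  have : ‖B (sh b j) (sh c k) H x t‖ ≤ ∫ s, (C / (1 + t ^ 2) ^ p) * (1 + s ^ 2)⁻¹ := by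
    refine norm_integral_le_of_norm_le (integrable_inv_one_add_sq.const_mul _)
      (Filter.Eventually.of_forall fun s => ?_)
    have := h j k H x t s
    rw [div_mul_eq_mul_div, le_div_iff₀ h0, mul_comm]; exact this
  rw [integral_const_mul, integral_univ_inv_one_add_sq, div_mul_eq_mul_div, le_div_iff₀ h0] at this
  rw [mul_comm]; exact this

lemma B_deriv {b c} (hb : CS b) (hc : CS c) (H x t : ℝ) :
    HasDerivAt (fun H => B b c H x t) (B (dx b) (dd c) H x t - B (dd b) (dx c) H x t) H := by
  obtain ⟨C, hC, h⟩ := Bi_dom0 hb.dx hc.dd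
  obtain ⟨C', hC', h'⟩ := Bi_dom0 hb.dd hc.dx
  have key := hasDerivAt_integral_of_dominated_loc_of_deriv_le (μ := (volume : Measure ℝ)) (𝕜 := ℝ)
    (bound := fun s => C * (1 + s ^ 2)⁻¹ + C' * (1 + s ^ 2)⁻¹)
    (F := fun (H : ℝ) (s : ℝ) => Bi b c H x t s)
    (F' := fun (H : ℝ) (s : ℝ) => Bi (dx b) (dd c) H x t s - Bi (dd b) (dx c) H x t s)
    (x₀ := H) (s := Set.univ) Filter.univ_mem ?_ ?_ ?_ ?_ ?_ ?_
  · have h2 := key.2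
    rw [integral_sub (Bi_int hb.dx hc.dd _ _ _) (Bi_int hb.dd hc.dx _ _ _)] at h2
    exact h2
  · exact Filter.Eventually.of_forall fun H => (Bi_cont hb hc H x t).aestronglyMeasurable
  · exact Bi_int hb hc _ _ _
  · exact ((Bi_cont hb.dx hc.dd H x t).sub (Bi_cont hb.dd hc.dx H x t)).aestronglyMeasurable
  · refine Filter.Eventually.of_forall fun s H _ => ?_
    exact (norm_sub_le _ _).trans (add_le_add (h _ _ _ _) (h' _ _ _ _))
  · exact (integrable_inv_one_add_sq.const_mul C).add (integrable_inv_one_add_sq.const_mul C')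
  · refine Filter.Eventually.of_forall fun s H _ => ?_
    have e1 := F_line hb x (t - s) (s / 2) 0 H
    have e2 := F_line hc x s (-(t - s) / 2) 0 H
    refine HasDerivAt.congr_deriv ((e1.mul e2).congr_of_eventuallyEq
      (Filter.Eventually.of_forall fun H => ?_)) ?_
    · simp only [Bi, Pi.mul_apply]
      congr 2 <;> ring
    · simp only [Bi, F_dd hb, F_dd hc]
      have a1 : x + s / 2 * H = x + H * s / 2 := by ring
      have a2 : x + -(t - s) / 2 * H = x - H * (t - s) / 2 := by ring
      have a3 : t - s + 0 * H = t - s := by ring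
      have a4 : s + 0 * H = s := by ring
      rw [a1, a2, a3, a4]
      push_cast; ring

lemma F_inv {c} (hc : CS c) (x η : ℝ) :
    ∫ s : ℝ, Complex.exp (-(2 * Real.pi * Complex.I * (s : ℂ) * (η : ℂ))) * F c x s = c (x, η) := by
  have hF : FourierTransformInv.fourierInv (fun η => c (x, η)) = fun s => F c x s := by
    funext s
    rw [Real.fourierInv_eq']
    simp only [F, smul_eq_mul]
    congr 1; funext v; congr 2
    simp; ring
  have hcont : Continuous (fun η => c (x, η)) := hc.cont.comp (by fun_prop)
  have hint : Integrable (fun η => c (x, η)) := by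
    simpa using F_int hc x 0
  have hFi : Integrable (fun s => F c x s) := by
    obtain ⟨C, hC, h⟩ := F_decay 1 hc
    refine (integrable_inv_one_add_sq.const_mul C).mono'
      ((F_cont hc).comp (by fun_prop : Continuous fun s : ℝ => (x, s))).aestronglyMeasurable
      (Filter.Eventually.of_forall fun s => ?_)
    rw [← div_eq_mul_inv, le_div_iff₀ (by positivity), mul_comm]
    simpa using h x s
  have hG : FourierTransform.fourier (fun η => c (x, η)) = fun s => F c x (-s) := by
    funext s
    have h3 := congrFun hF (-s)
    rw [Real.fourierInv_eq_fourier_neg, neg_neg] at h3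
    exact h3
  have := hcont.fourier_fourierInv_eq hint (by rw [hG]; exact hFi.comp_neg)
  have h2 := congrFun this η
  rw [hF, Real.fourier_eq'] at h2
  rw [← h2]
  simp only [smul_eq_mul]
  congr 1; funext v; congr 2
  simp; ring

lemma F_integrable {c} (hc : CS c) (x : ℝ) : Integrable (fun s => F c x s) := by
  obtain ⟨C, hC, h⟩ := F_decay 1 hc
  refine (integrable_inv_one_add_sq.const_mul C).mono'
    ((F_cont hc).comp (by fun_prop : Continuous fun s : ℝ => (x, s))).aestronglyMeasurable
    (Filter.Eventually.of_forall fun s => ?_)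
  rw [← div_eq_mul_inv, le_div_iff₀ (by positivity), mul_comm]
  simpa using h x s

lemma B_zero {b c} (hb : CS b) (hc : CS c) (x t : ℝ) :
    B b c 0 x t = F (fun p => b p * c p) x t := by
  have hbc := hb.cont
  have hbi : Integrable (fun η => b (x, η)) := by simpa using F_int hb x 0
  have e : B b c 0 x t = ∫ s : ℝ, ∫ η : ℝ,
      Complex.exp (2 * Real.pi * Complex.I * ((t - s : ℝ) : ℂ) * (η : ℂ)) * b (x, η) * F c x s := by
    simp only [B, Bi, zero_mul, zero_div, add_zero, sub_zero]
    congr 1; funext s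
    rw [integral_mul_const]; rfl
  rw [e, integral_integral_swap]
  · simp only [F]
    congr 1; funext η
    rw [← F_inv hc x η, ← integral_const_mul, ← integral_const_mul]
    congr 1; funext s
    have : Complex.exp (2 * Real.pi * Complex.I * ((t - s : ℝ) : ℂ) * (η : ℂ)) =
      Complex.exp (2 * Real.pi * Complex.I * (t : ℂ) * (η : ℂ)) *
        Complex.exp (-(2 * Real.pi * Complex.I * (s : ℂ) * (η : ℂ))) := by
      rw [← Complex.exp_add]; congr 1; push_cast; ring
    rw [this, F]; ring
  · have := (F_integrable hc x).mul_prod hbi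
    refine this.norm.mono' ?_ (Filter.Eventually.of_forall fun p => ?_)
    · have h1 := (F_cont hc).comp (by fun_prop : Continuous fun p : ℝ × ℝ => (x, p.1))
      refine Continuous.aestronglyMeasurable (Continuous.mul (by fun_prop) h1)
    · simp only [Function.uncurry, norm_mul, norm_exp]
      rw [one_mul, mul_comm]

end WL

namespace WL

lemma ts_dx (b) : tsupport (dx b) ⊆ tsupport b := tsupport_fderiv_apply_subset ℝ _
lemma ts_dk (b) : tsupport (dk b) ⊆ tsupport b := tsupport_fderiv_apply_subset ℝ _
lemma ts_dd (b) : tsupport (dd b) ⊆ tsupport b := (tsupport_mul_subset_right).trans (ts_dk b)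

lemma small (N : ℕ) : ∀ {b c} (_ : CS b) (_ : CS c) (S : ℤ × ℤ → ℤ × ℤ → Prop)
    (_ : ∀ j k, S j k → Disjoint (tsupport (sh b j)) (tsupport (sh c k))),
    ∃ C : ℝ, 0 ≤ C ∧ ∀ j k, S j k → ∀ H x t, 0 ≤ H → 
      (1 + t ^ 2) * ‖B (sh b j) (sh c k) H x t‖ ≤ C * H ^ N := by
  induction N with
  | zero =>
    intro b c hb hc S hS
    obtain ⟨C, hC, h⟩ := B_dom hb hc 1
    refine ⟨C, hC, fun j k _ H x t _ => ?_⟩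
    simpa using h j k H x t
  | succ N ih =>
    intro b c hb hc S hS
    obtain ⟨C, hC, h⟩ := ih hb.dx hc.dd S (fun j k hjk => by
      rw [← dx_sh, ← dd_sh]; exact (hS j k hjk).mono (ts_dx _) (ts_dd _))
    obtain ⟨C', hC', h'⟩ := ih hb.dd hc.dx S (fun j k hjk => by
      rw [← dx_sh, ← dd_sh]; exact (hS j k hjk).mono (ts_dd _) (ts_dx _))
    refine ⟨C + C', by positivity, fun j k hjk H x t hH => ?_⟩
    have h0 : 0 < 1 + t ^ 2 := by positivity
    have hz : B (sh b j) (sh c k) 0 x t = 0 := by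
      rw [B_zero (hb.sh j) (hc.sh k)]
      have : ∀ p, sh b j p * sh c k p = 0 := by
        intro p
        by_contra hne
        exact Set.disjoint_left.1 (hS j k hjk) (subset_tsupport _ (left_ne_zero_of_mul hne))
          (subset_tsupport _ (right_ne_zero_of_mul hne))
      simp [F, this]
    have mv := norm_image_sub_le_of_norm_deriv_le_segment' (a := 0) (b := H)
      (f := fun H => B (sh b j) (sh c k) H x t) (C := (C + C') * H ^ N / (1 + t ^ 2))
      (fun σ _ => (B_deriv (hb.sh j) (hc.sh k) σ x t).hasDerivWithinAt) (fun σ hσ => ?_) H ⟨hH, le_rfl⟩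
    · simp only [hz, sub_zero] at mv
      rw [div_mul_eq_mul_div, le_div_iff₀ h0] at mv
      calc _ = ‖B (sh b j) (sh c k) H x t‖ * (1 + t ^ 2) := by ring
        _ ≤ _ := mv
        _ = _ := by ring
    · rw [le_div_iff₀ h0]
      rw [dx_sh, dd_sh, dx_sh, dd_sh]
      have a1 := h j k hjk σ x t hσ.1
      have a2 := h' j k hjk σ x t hσ.1
      have a3 : σ ^ N ≤ H ^ N := pow_le_pow_left₀ hσ.1 hσ.2.le N
      have a4 := norm_sub_le (B (sh (dx b) j) (sh (dd c) k) σ x t) (B (sh (dd b) j) (sh (dx c) k) σ x t)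
      calc _ ≤ (‖B (sh (dx b) j) (sh (dd c) k) σ x t‖ + ‖B (sh (dd b) j) (sh (dx c) k) σ x t‖) * (1 + t ^ 2) := by gcongr
        _ ≤ C * σ ^ N + C' * σ ^ N := by linarith
        _ ≤ (C + C') * H ^ N := by rw [← add_mul]; gcongr

lemma ts_sh (b) (j : ℤ × ℤ) (p : ℝ × ℝ) (hp : p ∈ tsupport (sh b j)) :
    (p.1 - (j.1 : ℝ), p.2 - (j.2 : ℝ)) ∈ tsupport b := by
  have hcont : Continuous (fun p : ℝ × ℝ => (p.1 - (j.1 : ℝ), p.2 - (j.2 : ℝ))) := by fun_prop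
  have := tsupport_comp_subset_preimage b hcont
  exact this hp

lemma small' (N : ℕ) {χ a} (hχ : CS χ) (ha : CS a) (U : Set (ℝ × ℝ)) (hU : IsOpen U)
    (haU : tsupport a ⊆ U) (h1 : ∀ p ∈ U, χ p = 1) :
    ∃ C : ℝ, 0 ≤ C ∧ ∀ j : ℤ × ℤ, ∀ H x t, 0 ≤ H → 
      (1 + t ^ 2) * ‖B (sh χ j) (sh a j) H x t - F (sh a j) x t‖ ≤ C * H ^ (N + 1) := by
  have hfd : ∀ p ∈ U, fderiv ℝ χ p = 0 := by
    intro p hp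
    have : χ =ᶠ[nhds p] fun _ => (1 : ℂ) :=
      Filter.eventuallyEq_of_mem (hU.mem_nhds hp) h1
    rw [this.fderiv_eq]; simp
  have aux : ∀ f : ℝ × ℝ → ℂ, (∀ p ∈ U, f p = 0) → tsupport f ⊆ Uᶜ := by
    intro f hf
    refine closure_minimal ?_ hU.isClosed_compl
    intro p hp hpU
    exact hp (hf p hpU)
  have d1 := aux (dx χ) (fun p hp => by simp [dx, hfd p hp])
  have d2 := aux (dd χ) (fun p hp => by simp [dd, dk, hfd p hp])
  have dis : ∀ f g, tsupport f ⊆ Uᶜ → tsupport g ⊆ tsupport a → ∀ j k : ℤ × ℤ, j = k →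
      Disjoint (tsupport (sh f j)) (tsupport (sh g k)) := by
    rintro f g hf hg j _ rfl
    refine Set.disjoint_left.2 fun p hp hp' => ?_
    exact hf (ts_sh _ _ _ hp) (haU (hg (ts_sh _ _ _ hp')))
  obtain ⟨C, hC, h⟩ := small N hχ.dx ha.dd (fun j k => j = k) (dis _ _ d1 (ts_dd a))
  obtain ⟨C', hC', h'⟩ := small N hχ.dd ha.dx (fun j k => j = k) (dis _ _ d2 (ts_dx a))
  refine ⟨C + C', by positivity, fun j H x t hH => ?_⟩
  have h0 : 0 < 1 + t ^ 2 := by positivity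
  have hz : B (sh χ j) (sh a j) 0 x t = F (sh a j) x t := by
    rw [B_zero (hχ.sh j) (ha.sh j)]
    congr 1; funext p
    by_cases hp : sh a j p = 0
    · simp [hp]
    · have : sh χ j p = 1 := h1 _ (haU (ts_sh _ _ _ (subset_tsupport _ hp)))
      rw [this, one_mul]
  have mv := norm_image_sub_le_of_norm_deriv_le_segment' (a := 0) (b := H)
    (f := fun H => B (sh χ j) (sh a j) H x t) (C := (C + C') * H ^ N / (1 + t ^ 2))
    (fun σ _ => (B_deriv (hχ.sh j) (ha.sh j) σ x t).hasDerivWithinAt) (fun σ hσ => ?_) H ⟨hH, le_rfl⟩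
  · simp only [hz, sub_zero] at mv
    rw [div_mul_eq_mul_div, le_div_iff₀ h0] at mv
    calc _ = ‖B (sh χ j) (sh a j) H x t - F (sh a j) x t‖ * (1 + t ^ 2) := by ring
      _ ≤ _ := mv
      _ = _ := by ring
  · rw [le_div_iff₀ h0]
    rw [dx_sh, dd_sh, dx_sh, dd_sh]
    have a1 := h j j rfl σ x t hσ.1
    have a2 := h' j j rfl σ x t hσ.1
    have a3 : σ ^ N ≤ H ^ N := pow_le_pow_left₀ hσ.1 hσ.2.le N
    have a4 := norm_sub_le (B (sh (dx χ) j) (sh (dd a) j) σ x t) (B (sh (dd χ) j) (sh (dx a) j) σ x t)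
    calc _ ≤ (‖B (sh (dx χ) j) (sh (dd a) j) σ x t‖ + ‖B (sh (dd χ) j) (sh (dx a) j) σ x t‖) * (1 + t ^ 2) := by gcongr
      _ ≤ C * σ ^ N + C' * σ ^ N := by linarith
      _ ≤ (C + C') * H ^ N := by rw [← add_mul]; gcongr

lemma F_zero {b} (R : ℝ) (hR : ∀ x η, R < |x| ∨ R < |η| → b (x, η) = 0) (j : ℤ × ℤ) (x t : ℝ)
    (hx : R < |x - j.1|) : F (sh b j) x t = 0 := by
  rw [F_sh]
  have : F b (x - j.1) t = 0 := by
    simp [F, hR _ _ (Or.inl hx)]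
  rw [this, mul_zero]

lemma decay1 {b c} (hb : CS b) (hc : CS c) (p : ℕ) : ∃ C : ℝ, 0 ≤ C ∧ ∀ (j k : ℤ × ℤ) (H x t : ℝ),
    0 ≤ H → H ≤ 7 →
    (1 + ((j.1 : ℝ) - k.1) ^ 2) ^ p * ((1 + t ^ 2) * ‖B (sh b j) (sh c k) H x t‖) ≤ C := by
  obtain ⟨R, hR0, hR⟩ := hb.radius
  obtain ⟨R', hR0', hR'⟩ := hc.radius
  obtain ⟨C, hC, h⟩ := B_dom hb hc (p + 1)
  set K := 1 + 2 * (R + R') ^ 2 + 50 with hK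
  have hK0 : 0 < K := by positivity
  refine ⟨K ^ p * C, by positivity, fun j k H x t hH hH7 => ?_⟩
  by_cases hd : |(j.1 : ℝ) - k.1| ≤ R + R' + 7 / 2 * |t|
  · have h1 : 1 + ((j.1 : ℝ) - k.1) ^ 2 ≤ K * (1 + t ^ 2) := by
      have : ((j.1 : ℝ) - k.1) ^ 2 ≤ (R + R' + 7 / 2 * |t|) ^ 2 := by
        rw [← sq_abs]; gcongr
      have ht := sq_abs t
      have : (R + R' + 7 / 2 * |t|) ^ 2 ≤ 2 * (R + R') ^ 2 + 2 * (7 / 2) ^ 2 * t ^ 2 := by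
        rw [← ht]; nlinarith [sq_nonneg (R + R' - 7 / 2 * |t|)]
      have h5 : 0 ≤ (R + R') ^ 2 * t ^ 2 := by positivity
      have := sq_nonneg t
      rw [hK]; nlinarith
    have h2 := h j k H x t
    calc _ ≤ (K * (1 + t ^ 2)) ^ p * ((1 + t ^ 2) * ‖B (sh b j) (sh c k) H x t‖) := by gcongr
      _ = K ^ p * ((1 + t ^ 2) ^ (p + 1) * ‖B (sh b j) (sh c k) H x t‖) := by
        rw [mul_pow]; ring
      _ ≤ _ := by gcongr
  · have hz : B (sh b j) (sh c k) H x t = 0 := by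
      rw [B]
      have : ∀ s, Bi (sh b j) (sh c k) H x t s = 0 := by
        intro s
        rw [Bi]
        by_cases h1 : R < |x + H * s / 2 - j.1|
        · rw [F_zero R hR j _ _ h1, zero_mul]
        by_cases h2 : R' < |x - H * (t - s) / 2 - k.1|
        · rw [F_zero R' hR' k _ _ h2, mul_zero]
        exfalso
        apply hd
        push Not at h1 h2
        have e : (j.1 : ℝ) - k.1 = -(x + H * s / 2 - j.1) + (x - H * (t - s) / 2 - k.1) + H / 2 * t := by ring
        rw [e]
        have h3 : |H / 2 * t| ≤ 7 / 2 * |t| := by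
          rw [abs_mul, abs_of_nonneg (by positivity : 0 ≤ H / 2)]; gcongr
        have h4 := abs_add_le (-(x + H * s / 2 - j.1) + (x - H * (t - s) / 2 - k.1)) (H / 2 * t)
        have h5 := abs_add_le (-(x + H * s / 2 - j.1)) (x - H * (t - s) / 2 - k.1)
        rw [abs_neg] at h5
        linarith
      simp [this]
    rw [hz]; simp; positivity

lemma F_mt_sh {b} (hb : CS b) (j : ℤ × ℤ) (x t : ℝ) : F (mt (sh b j)) x t =
    F (sh (mt b) j) x t + (2 * Real.pi * Complex.I * (j.2 : ℂ)) * F (sh b j) x t := by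
  have : mt (sh b j) = fun p => sh (mt b) j p + ((2 * Real.pi * Complex.I * (j.2 : ℂ)) * sh b j p) := by
    funext p; exact mt_sh b j p
  rw [this, F_add (hb.mt.sh j) (c := fun p => ((2 * Real.pi * Complex.I * (j.2 : ℂ)) * sh b j p))
    ⟨contDiff_const.mul (hb.sh j).smooth, (hb.sh j).cpt.mul_left⟩, F_smul]

lemma B_ibp {b c} (hb : CS b) (hc : CS c) (j k : ℤ × ℤ) (H x t : ℝ) :
    (2 * Real.pi * Complex.I * ((j.2 : ℂ) - k.2)) * B (sh b j) (sh c k) H x t =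
      (H / 2 : ℂ) * B (sh (dx b) j) (sh c k) H x t - B (sh (mt b) j) (sh c k) H x t
      + (H / 2 : ℂ) * B (sh b j) (sh (dx c) k) H x t + B (sh b j) (sh (mt c) k) H x t := by
  have i0 := Bi_int (hb.sh j) (hc.sh k) H x t
  have i1 := Bi_int (hb.dx.sh j) (hc.sh k) H x t
  have i2 := Bi_int (hb.mt.sh j) (hc.sh k) H x t
  have i3 := Bi_int (hb.sh j) (hc.dx.sh k) H x t
  have i4 := Bi_int (hb.sh j) (hc.mt.sh k) H x t
  set z : ℂ := 2 * Real.pi * Complex.I * ((j.2 : ℂ) - k.2) with hz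
  have i12 := (i1.const_mul (H / 2 : ℂ)).sub i2
  have i123 := i12.add (i3.const_mul (H / 2 : ℂ))
  have i1234 := i123.add i4
  have key := integral_eq_zero_of_hasDerivAt_of_integrable
    (f := fun s => Bi (sh b j) (sh c k) H x t s)
    (f' := fun s => ((H / 2 : ℂ) * Bi (sh (dx b) j) (sh c k) H x t s - Bi (sh (mt b) j) (sh c k) H x t s
      + (H / 2 : ℂ) * Bi (sh b j) (sh (dx c) k) H x t s + Bi (sh b j) (sh (mt c) k) H x t s)
      - z * Bi (sh b j) (sh c k) H x t s) ?_ (i1234.sub (i0.const_mul z)) i0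
  · have e5 := integral_sub i1234 (i0.const_mul z)
    have e4 := integral_add i123 i4
    have e3 := integral_add i12 (i3.const_mul (H / 2 : ℂ))
    have e2 := integral_sub (i1.const_mul (H / 2 : ℂ)) i2
    simp only [integral_const_mul, Pi.add_apply, Pi.sub_apply] at e2 e3 e4 e5 
    simp only [B]
    rw [key, e4, e3, e2] at e5
    exact (sub_eq_zero.1 e5.symm).symm
  · intro s
    have e1 := F_line (hb.sh j) x t (H / 2) (-1) s
    have e2 := F_line (hc.sh k) (x - H * t / 2) 0 (H / 2) 1 s
    refine HasDerivAt.congr_deriv ((e1.mul e2).congr_of_eventuallyEq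
      (Filter.Eventually.of_forall fun s => ?_)) ?_
    · simp only [Bi, Pi.mul_apply]
      congr 2 <;> ring
    · have a1 : x + H / 2 * s = x + H * s / 2 := by ring
      have a2 : x - H * t / 2 + H / 2 * s = x - H * (t - s) / 2 := by ring
      have a3 : t + -1 * s = t - s := by ring
      have a4 : 0 + 1 * s = s := by ring
      rw [a1, a2, a3, a4]
      simp only [Bi, F_mt_sh hb, F_mt_sh hc, dx_sh, hz]
      push_cast; ring

lemma decay2 (m : ℕ) : ∀ {b c} (_ : CS b) (_ : CS c), ∃ C : ℝ, 0 ≤ C ∧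
    ∀ (j k : ℤ × ℤ) (H x t : ℝ), 0 ≤ H → H ≤ 7 →
    |(j.2 : ℝ) - k.2| ^ m * ((1 + t ^ 2) * ‖B (sh b j) (sh c k) H x t‖) ≤ C := by
  induction m with
  | zero =>
    intro b c hb hc
    obtain ⟨C, hC, h⟩ := B_dom hb hc 1
    refine ⟨C, hC, fun j k H x t _ _ => ?_⟩
    simpa using h j k H x t
  | succ m ih =>
    intro b c hb hc
    obtain ⟨C1, hC1, h1⟩ := ih hb.dx hc
    obtain ⟨C2, hC2, h2⟩ := ih hb.mt hc
    obtain ⟨C3, hC3, h3⟩ := ih hb hc.dx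
    obtain ⟨C4, hC4, h4⟩ := ih hb hc.mt
    refine ⟨4 * C1 + C2 + 4 * C3 + C4, by positivity, fun j k H x t hH hH7 => ?_⟩
    have e := congrArg norm (B_ibp hb hc j k H x t)
    have n1 : ‖(2 * Real.pi * Complex.I * ((j.2 : ℂ) - k.2))‖ = 2 * Real.pi * |(j.2 : ℝ) - k.2| := by
      have : (j.2 : ℂ) - k.2 = (((j.2 : ℝ) - k.2 : ℝ) : ℂ) := by push_cast; rfl
      rw [this, norm_mul, norm_mul, norm_mul, Complex.norm_real, Complex.norm_real, Complex.norm_I,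
        Real.norm_eq_abs, Real.norm_eq_abs, abs_of_pos Real.pi_pos]
      simp
    have n2 : ‖(H / 2 : ℂ)‖ ≤ 4 := by
      have : (H / 2 : ℂ) = ((H / 2 : ℝ) : ℂ) := by push_cast; rfl
      rw [this, Complex.norm_real, Real.norm_eq_abs, abs_of_nonneg (by positivity)]; linarith
    rw [norm_mul, n1] at e
    have hpi : 1 ≤ 2 * Real.pi := by linarith [Real.pi_gt_three]
    have g1 := h1 j k H x t hH hH7
    have g2 := h2 j k H x t hH hH7
    have g3 := h3 j k H x t hH hH7
    have g4 := h4 j k H x t hH hH7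
    set D := |(j.2 : ℝ) - k.2| with hD
    have hD0 : 0 ≤ D := abs_nonneg _
    have up : D * ‖B (sh b j) (sh c k) H x t‖ ≤ 4 * ‖B (sh (dx b) j) (sh c k) H x t‖ +
        ‖B (sh (mt b) j) (sh c k) H x t‖ + 4 * ‖B (sh b j) (sh (dx c) k) H x t‖ +
        ‖B (sh b j) (sh (mt c) k) H x t‖ := by
      calc D * ‖B (sh b j) (sh c k) H x t‖ ≤ 2 * Real.pi * D * ‖B (sh b j) (sh c k) H x t‖ := by
            gcongr; nlinarith
        _ = _ := e
        _ ≤ _ := by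
          refine (norm_add_le _ _).trans (add_le_add ?_ le_rfl)
          refine (norm_add_le _ _).trans (add_le_add ?_ ?_)
          · refine (norm_sub_le _ _).trans (add_le_add ?_ le_rfl)
            rw [norm_mul]; gcongr
          · rw [norm_mul]; gcongr
    calc _ = (D ^ m * (1 + t ^ 2)) * (D * ‖B (sh b j) (sh c k) H x t‖) := by ring
      _ ≤ _ := mul_le_mul_of_nonneg_left up (by positivity)
      _ ≤ _ := by linarith

/-- combined weight -/
def W (d : ℤ × ℤ) : ℝ := (1 + (d.1 : ℝ) ^ 2) * (1 + (d.2 : ℝ) ^ 2)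

lemma decay {b c} (hb : CS b) (hc : CS c) (p : ℕ) : ∃ C : ℝ, 0 ≤ C ∧
    ∀ (j k : ℤ × ℤ) (H x t : ℝ), 0 ≤ H → H ≤ 7 →
    W (j - k) ^ p * ((1 + t ^ 2) * ‖B (sh b j) (sh c k) H x t‖) ≤ C := by
  obtain ⟨C1, hC1, h1⟩ := decay1 hb hc (2 * p)
  obtain ⟨C2, hC2, h2⟩ := decay2 (4 * p) hb hc
  refine ⟨C1 + 4 ^ p * C2, by positivity, fun j k H x t hH hH7 => ?_⟩
  have g1 := h1 j k H x t hH hH7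
  have g2 := h2 j k H x t hH hH7
  set X := (1 + t ^ 2) * ‖B (sh b j) (sh c k) H x t‖
  have hX : 0 ≤ X := by positivity
  have e1 : (((j - k).1 : ℤ) : ℝ) = (j.1 : ℝ) - k.1 := by simp
  have e2 : (((j - k).2 : ℤ) : ℝ) = (j.2 : ℝ) - k.2 := by simp
  rw [← e1] at g1
  rw [← e2] at g2
  generalize j - k = d at g1 g2
  have key : W d ^ p ≤ (1 + (d.1 : ℝ) ^ 2) ^ (2 * p) + 4 ^ p * |(d.2 : ℝ)| ^ (4 * p) := by
    have hdd : W d ≤ (1 + (d.1 : ℝ) ^ 2) ^ 2 ∨ W d ≤ 4 * |(d.2 : ℝ)| ^ 4 := by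
      have e4 : |(d.2 : ℝ)| ^ 4 = ((d.2 : ℝ) ^ 2) ^ 2 := by
        rw [show 4 = 2 * 2 from rfl, pow_mul, sq_abs]
      rw [e4, W]
      by_cases h0 : (d.2 : ℝ) ^ 2 ≤ (d.1 : ℝ) ^ 2
      · left; nlinarith [sq_nonneg (d.1 : ℝ)]
      · right
        push Not at h0
        have hne : d.2 ≠ 0 := by
          rintro hh; rw [hh] at h0; simp at h0; nlinarith [sq_nonneg (d.1 : ℝ)]
        have h1 : (1 : ℝ) ≤ (d.2 : ℝ) ^ 2 := by
          have : 1 ≤ d.2 ^ 2 := by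
            have := sq_pos_of_ne_zero hne
            omega
          exact_mod_cast this
        nlinarith [sq_nonneg (d.1 : ℝ)]
    have hW : 0 ≤ W d := by unfold W; positivity
    rcases hdd with h | h
    · have := pow_le_pow_left₀ hW h p
      rw [← pow_mul] at this
      have : 0 ≤ 4 ^ p * |(d.2 : ℝ)| ^ (4 * p) := by positivity
      linarith
    · have := pow_le_pow_left₀ hW h p
      rw [mul_pow, ← pow_mul] at this
      have : 0 ≤ (1 + (d.1 : ℝ) ^ 2) ^ (2 * p) := by positivity
      linarith
  calc _ ≤ ((1 + (d.1 : ℝ) ^ 2) ^ (2 * p) + 4 ^ p * |(d.2 : ℝ)| ^ (4 * p)) * X := by gcongr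
    _ = (1 + (d.1 : ℝ) ^ 2) ^ (2 * p) * X + 4 ^ p * (|(d.2 : ℝ)| ^ (4 * p) * X) := by ring
    _ ≤ _ := by gcongr

end WL

namespace WL

def IsKer (K : ℝ → ℝ → ℂ) (T : L2R →L[ℂ] L2R) : Prop :=
  ∀ u : L2R, (T u : ℝ → ℂ) =ᵐ[volume] fun y => ∫ z : ℝ, K y z * (u : ℝ → ℂ) z

def g (H r : ℝ) : ℝ := H⁻¹ * (1 + (r / H) ^ 2)⁻¹

lemma g_nonneg {H : ℝ} (hH : 0 < H) (r : ℝ) : 0 ≤ g H r := by unfold g; positivity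
lemma g_le {H : ℝ} (hH : 0 < H) (r : ℝ) : g H r ≤ H⁻¹ := by
  unfold g
  have : (1 + (r / H) ^ 2)⁻¹ ≤ 1 := inv_le_one_of_one_le₀ (by nlinarith [sq_nonneg (r / H)])
  calc _ ≤ H⁻¹ * 1 := by gcongr
    _ = _ := mul_one _
lemma g_cont (H : ℝ) : Continuous (g H) := by
  unfold g
  refine continuous_const.mul (Continuous.inv₀ (by fun_prop) fun r => by positivity)
lemma g_int {H : ℝ} (hH : 0 < H) : Integrable (g H) :=
  (integrable_inv_one_add_sq.comp_div hH.ne').const_mul _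
lemma g_integral {H : ℝ} (hH : 0 < H) : ∫ r, g H r = Real.pi := by
  unfold g
  rw [integral_const_mul, Measure.integral_comp_div (fun r => (1 + r ^ 2)⁻¹), integral_univ_inv_one_add_sq,
    abs_of_pos hH, smul_eq_mul]
  field_simp
lemma g_neg (H r : ℝ) : g H (-r) = g H r := by unfold g; congr 3; ring
lemma g_sub (H y z : ℝ) : g H (y - z) = g H (z - y) := by rw [← g_neg]; congr 1; ring

lemma g_int' {H : ℝ} (hH : 0 < H) (w : ℝ) : Integrable (fun z => g H (w - z)) :=
  (g_int hH).comp_sub_left w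
lemma g_integral' {H : ℝ} (hH : 0 < H) (w : ℝ) : ∫ z, g H (w - z) = Real.pi := by
  rw [integral_sub_left_eq_self (fun z => g H z) volume w, g_integral hH]

lemma g_lint {H : ℝ} (hH : 0 < H) (w : ℝ) : ∫⁻ z, ENNReal.ofReal (g H (w - z)) = ENNReal.ofReal Real.pi := by
  rw [← ofReal_integral_eq_lintegral_ofReal (g_int' hH w)
    (Filter.Eventually.of_forall fun z => g_nonneg hH _), g_integral' hH]

structure KB (K : ℝ → ℝ → ℂ) (H C : ℝ) : Prop where
  meas : Continuous (Function.uncurry K)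
  bd : ∀ y z, ‖K y z‖ ≤ C * g H (y - z)

lemma cs (f φ : ℝ → ENNReal) (hf : AEMeasurable f volume) (hφ : AEMeasurable φ volume) :
    (∫⁻ z, φ z * f z) ^ (2 : ℝ) ≤ (∫⁻ z, φ z) * ∫⁻ z, φ z * f z ^ (2 : ℝ) := by
  have h := ENNReal.lintegral_mul_le_Lp_mul_Lq volume Real.HolderConjugate.two_two
    (f := fun z => φ z ^ (1 / 2 : ℝ)) (g := fun z => φ z ^ (1 / 2 : ℝ) * f z)
    (hφ.pow_const _) ((hφ.pow_const _).mul hf)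
  have e1 : ∀ z, φ z ^ (1 / 2 : ℝ) * φ z ^ (1 / 2 : ℝ) = φ z := by
    intro z
    rw [← ENNReal.rpow_add_of_nonneg _ _ (by norm_num) (by norm_num)]; norm_num
  have e2 : ∀ z, (φ z ^ (1 / 2 : ℝ)) ^ (2 : ℝ) = φ z := by
    intro z; rw [← ENNReal.rpow_mul]; norm_num
  have h2 : ∫⁻ z, φ z * f z ≤ (∫⁻ z, φ z) ^ (1 / 2 : ℝ) * (∫⁻ z, φ z * f z ^ (2 : ℝ)) ^ (1 / 2 : ℝ) := by
    refine le_trans (le_of_eq ?_) (h.trans (le_of_eq ?_))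
    · congr 1; funext z; simp only [Pi.mul_apply]; rw [← mul_assoc, e1]
    · simp only [e2]
      congr 3; funext z
      rw [ENNReal.mul_rpow_of_nonneg _ _ (by norm_num), e2]
  calc _ ≤ ((∫⁻ z, φ z) ^ (1 / 2 : ℝ) * (∫⁻ z, φ z * f z ^ (2 : ℝ)) ^ (1 / 2 : ℝ)) ^ (2 : ℝ) := by gcongr
    _ = _ := by
      rw [ENNReal.mul_rpow_of_nonneg _ _ (by norm_num), ← ENNReal.rpow_mul, ← ENNReal.rpow_mul]; norm_num

lemma schur {K T} (hT : IsKer K T) {H C : ℝ} (hH : 0 < H) (hC : 0 ≤ C)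
    (hK : ∀ y z, ‖K y z‖ ≤ C * g H (y - z)) : ‖T‖ ≤ C * Real.pi := by
  refine T.opNorm_le_bound (by positivity) fun u => ?_
  set f : ℝ → ENNReal := fun z => ‖(u : ℝ → ℂ) z‖ₑ with hf
  have hfm : AEMeasurable f volume := (Lp.aestronglyMeasurable u).enorm
  have hgm : ∀ y, Measurable fun z => ENNReal.ofReal (g H (y - z)) := fun y =>
    ((g_cont H).comp (continuous_const.sub continuous_id)).measurable.ennreal_ofReal
  have pt : ∀ y, ‖∫ z : ℝ, K y z * (u : ℝ → ℂ) z‖ₑ ^ (2 : ℝ) ≤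
      ENNReal.ofReal C ^ (2 : ℝ) * (ENNReal.ofReal Real.pi * ∫⁻ z, ENNReal.ofReal (g H (y - z)) * f z ^ (2 : ℝ)) := by
    intro y
    have h1 : ‖∫ z : ℝ, K y z * (u : ℝ → ℂ) z‖ₑ ≤ ENNReal.ofReal C * ∫⁻ z, ENNReal.ofReal (g H (y - z)) * f z := by
      refine (enorm_integral_le_lintegral_enorm _).trans ?_
      rw [← lintegral_const_mul' _ _ ENNReal.ofReal_ne_top]
      refine lintegral_mono fun z => ?_
      rw [enorm_mul, ← mul_assoc, ← ENNReal.ofReal_mul hC]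
      gcongr
      rw [← ofReal_norm_eq_enorm]
      exact ENNReal.ofReal_le_ofReal (hK y z)
    calc _ ≤ (ENNReal.ofReal C * ∫⁻ z, ENNReal.ofReal (g H (y - z)) * f z) ^ (2 : ℝ) := by gcongr
      _ = ENNReal.ofReal C ^ (2 : ℝ) * (∫⁻ z, ENNReal.ofReal (g H (y - z)) * f z) ^ (2 : ℝ) :=
        ENNReal.mul_rpow_of_nonneg _ _ (by norm_num)
      _ ≤ _ := by
        gcongr
        rw [← g_lint hH y]
        exact cs f _ hfm (hgm y).aemeasurable
  have hmeas2 : AEMeasurable (Function.uncurry fun (y z : ℝ) => ENNReal.ofReal (g H (y - z)) * f z ^ (2 : ℝ))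
      (volume.prod volume) := by
    refine AEMeasurable.mul ?_ ?_
    · exact ((g_cont H).comp (continuous_fst.sub continuous_snd)).measurable.ennreal_ofReal.aemeasurable
    · exact (hfm.pow_const _).comp_snd
  have tot : ∫⁻ y, ‖(T u : ℝ → ℂ) y‖ₑ ^ (2 : ℝ) ≤
      (ENNReal.ofReal (C * Real.pi)) ^ (2 : ℝ) * ∫⁻ z, f z ^ (2 : ℝ) := by
    calc _ = ∫⁻ y, ‖∫ z : ℝ, K y z * (u : ℝ → ℂ) z‖ₑ ^ (2 : ℝ) := by
          refine lintegral_congr_ae ?_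
          filter_upwards [hT u] with y hy
          rw [hy]
      _ ≤ ∫⁻ y, ENNReal.ofReal C ^ (2 : ℝ) * (ENNReal.ofReal Real.pi * ∫⁻ z, ENNReal.ofReal (g H (y - z)) * f z ^ (2 : ℝ)) :=
        lintegral_mono pt
      _ = ENNReal.ofReal C ^ (2 : ℝ) * (ENNReal.ofReal Real.pi * ∫⁻ y, ∫⁻ z, ENNReal.ofReal (g H (y - z)) * f z ^ (2 : ℝ)) := by
        rw [lintegral_const_mul' _ _ (by simp), lintegral_const_mul' _ _ (by simp)]
      _ = ENNReal.ofReal C ^ (2 : ℝ) * (ENNReal.ofReal Real.pi * ∫⁻ z, ∫⁻ y, ENNReal.ofReal (g H (y - z)) * f z ^ (2 : ℝ)) := by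
        rw [lintegral_lintegral_swap hmeas2]
      _ = ENNReal.ofReal C ^ (2 : ℝ) * (ENNReal.ofReal Real.pi * ∫⁻ z, ENNReal.ofReal Real.pi * f z ^ (2 : ℝ)) := by
        congr 3; funext z
        simp_rw [g_sub H _ z]
        rw [lintegral_mul_const'' _ (hgm z).aemeasurable, g_lint hH]
      _ = _ := by
        rw [lintegral_const_mul' _ _ (by simp), ENNReal.ofReal_mul hC,
          ENNReal.mul_rpow_of_nonneg _ _ (by norm_num)]
        rw [show (2 : ℝ) = ((2 : ℕ) : ℝ) by norm_num]
        simp only [ENNReal.rpow_natCast]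
        ring
  have fin : eLpNorm (T u : ℝ → ℂ) 2 volume ≤ ENNReal.ofReal (C * Real.pi) * eLpNorm (u : ℝ → ℂ) 2 volume := by
    rw [eLpNorm_eq_lintegral_rpow_enorm_toReal (by norm_num) (by norm_num),
      eLpNorm_eq_lintegral_rpow_enorm_toReal (by norm_num) (by norm_num)]
    simp only [ENNReal.toReal_ofNat]
    calc _ ≤ ((ENNReal.ofReal (C * Real.pi)) ^ (2 : ℝ) * ∫⁻ z, f z ^ (2 : ℝ)) ^ (1 / 2 : ℝ) := by gcongr
      _ = _ := by
        rw [ENNReal.mul_rpow_of_nonneg _ _ (by norm_num), ← ENNReal.rpow_mul]; norm_num [hf]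
  rw [Lp.norm_def, Lp.norm_def]
  have := ENNReal.toReal_mono (ENNReal.mul_ne_top (by simp) (Lp.eLpNorm_ne_top u)) fin
  rwa [ENNReal.toReal_mul, ENNReal.toReal_ofReal (by positivity)] at this

lemma sq_int (u : L2R) : Integrable (fun z => ‖(u : ℝ → ℂ) z‖ ^ 2) :=
  (memLp_two_iff_integrable_sq_norm (Lp.aestronglyMeasurable u)).1 (Lp.memLp u)

/-- dominating function for `K w z * u z` -/
def D (H C : ℝ) (u : L2R) (w z : ℝ) : ℝ := (C ^ 2 * H⁻¹) * g H (w - z) + ‖(u : ℝ → ℂ) z‖ ^ 2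

lemma D_int {H : ℝ} (hH : 0 < H) (C u w) : Integrable (D H C u w) :=
  ((g_int' hH w).const_mul _).add (sq_int u)

lemma D_integral {H : ℝ} (hH : 0 < H) (C u w) : ∫ z, D H C u w z =
    (C ^ 2 * H⁻¹) * Real.pi + ∫ z, ‖(u : ℝ → ℂ) z‖ ^ 2 := by
  unfold D
  rw [integral_add ((g_int' hH w).const_mul _) (sq_int u), integral_const_mul, g_integral' hH]

lemma KB.dom {K H C} (hK : KB K H C) (hH : 0 < H) (u : L2R) (w z : ℝ) :
    ‖K w z * (u : ℝ → ℂ) z‖ ≤ D H C u w z := by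
  rw [norm_mul, D]
  have h1 := hK.bd w z
  have h2 := g_le hH (w - z)
  have h3 := g_nonneg hH (w - z)
  have h4 : ‖K w z‖ ^ 2 ≤ C ^ 2 * H⁻¹ * g H (w - z) := by
    calc _ ≤ (C * g H (w - z)) ^ 2 := by gcongr
      _ = C ^ 2 * g H (w - z) * g H (w - z) := by ring
      _ ≤ _ := by gcongr
  nlinarith [sq_nonneg (‖K w z‖ - ‖(u : ℝ → ℂ) z‖), sq_nonneg (‖K w z‖), sq_nonneg ‖(u : ℝ → ℂ) z‖]

lemma KB.int {K H C} (hK : KB K H C) (hH : 0 < H) (u : L2R) (w : ℝ) :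
    Integrable (fun z => K w z * (u : ℝ → ℂ) z) := by
  refine (D_int hH C u w).mono' ?_ (Filter.Eventually.of_forall (hK.dom hH u w))
  exact ((hK.meas.comp (by fun_prop : Continuous fun z : ℝ => (w, z))).aestronglyMeasurable).mul
    (Lp.aestronglyMeasurable u)

lemma isKer_sub {K₁ K₂ T₁ T₂} (h₁ : IsKer K₁ T₁) (h₂ : IsKer K₂ T₂)
    (i₁ : ∀ (u : L2R) y, Integrable (fun z => K₁ y z * (u : ℝ → ℂ) z))
    (i₂ : ∀ (u : L2R) y, Integrable (fun z => K₂ y z * (u : ℝ → ℂ) z)) :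
    IsKer (fun y z => K₁ y z - K₂ y z) (T₁ - T₂) := by
  intro u
  filter_upwards [h₁ u, h₂ u, Lp.coeFn_sub (T₁ u) (T₂ u)] with y e1 e2 e3
  rw [ContinuousLinearMap.sub_apply, e3, Pi.sub_apply, e1, e2, ← integral_sub (i₁ u y) (i₂ u y)]
  congr 1; funext z; ring

lemma comp_prod_int {K₁ K₂ H C₁ C₂} (k₁ : KB K₁ H C₁) (k₂ : KB K₂ H C₂) (hH : 0 < H) (u : L2R) (y : ℝ) :
    Integrable (Function.uncurry fun w z => K₁ y w * (K₂ w z * (u : ℝ → ℂ) z)) (volume.prod volume) := by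
  have hm : AEStronglyMeasurable (Function.uncurry fun w z => K₁ y w * (K₂ w z * (u : ℝ → ℂ) z)) (volume.prod volume) := by
    refine AEStronglyMeasurable.mul ?_ (AEStronglyMeasurable.mul ?_ ?_)
    · exact (k₁.meas.comp (by fun_prop : Continuous fun p : ℝ × ℝ => (y, p.1))).aestronglyMeasurable
    · exact k₂.meas.aestronglyMeasurable
    · exact (Lp.aestronglyMeasurable u).comp_snd
  have hk1 : Integrable (fun w => K₁ y w) :=
    ((g_int' hH y).const_mul C₁).mono' ((k₁.meas.comp (by fun_prop : Continuous fun w : ℝ => (y, w))).aestronglyMeasurable)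
      (Filter.Eventually.of_forall (k₁.bd y))
  rw [integrable_prod_iff hm]
  constructor
  · exact Filter.Eventually.of_forall fun w => by
      have := (k₂.int hH u w).const_mul (K₁ y w)
      exact this
  · refine (hk1.norm.mul_const ((C₂ ^ 2 * H⁻¹) * Real.pi + ∫ z, ‖(u : ℝ → ℂ) z‖ ^ 2)).mono'
      hm.norm.integral_prod_right' (Filter.Eventually.of_forall fun w => ?_)
    rw [Real.norm_of_nonneg (integral_nonneg fun z => norm_nonneg _)]
    simp only [Function.uncurry, norm_mul (K₁ y w)]
    rw [integral_const_mul, ← D_integral hH C₂ u w]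
    exact mul_le_mul_of_nonneg_left (integral_mono (k₂.int hH u w).norm (D_int hH C₂ u w) (k₂.dom hH u w)) (norm_nonneg _)

lemma isKer_comp {K₁ K₂ T₁ T₂ H C₁ C₂} (h₁ : IsKer K₁ T₁) (h₂ : IsKer K₂ T₂)
    (k₁ : KB K₁ H C₁) (k₂ : KB K₂ H C₂) (hH : 0 < H) :
    IsKer (fun y z => ∫ w, K₁ y w * K₂ w z) (T₁.comp T₂) ∧
    ∀ (u : L2R) y, Integrable (fun z => (∫ w, K₁ y w * K₂ w z) * (u : ℝ → ℂ) z) := by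
  have e : ∀ (u : L2R) (y z : ℝ), (∫ w, K₁ y w * K₂ w z) * (u : ℝ → ℂ) z =
      ∫ w, K₁ y w * (K₂ w z * (u : ℝ → ℂ) z) := by
    intro u y z
    rw [← integral_mul_const]; congr 1; funext w; ring
  constructor
  · intro u
    filter_upwards [h₁ (T₂ u)] with y hy
    rw [ContinuousLinearMap.comp_apply, hy]
    simp only [e]
    rw [← integral_integral_swap (comp_prod_int k₁ k₂ hH u y)]
    refine integral_congr_ae ?_
    filter_upwards [h₂ u] with w hw
    rw [hw, integral_const_mul]
  · intro u y
    simp only [e]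
    exact (comp_prod_int k₁ k₂ hH u y).integral_prod_right

lemma isKer_symm {K T H C} (hT : IsKer K T) (hK : KB K H C) (hH : 0 < H) (hC : 0 ≤ C)
    (hs : ∀ y z, K y z = starRingEnd ℂ (K z y)) : ContinuousLinearMap.adjoint T = T := by
  have hI : ∀ u v : L2R, Integrable (Function.uncurry fun y z =>
      starRingEnd ℂ (K y z * (u : ℝ → ℂ) z) * (v : ℝ → ℂ) y) (volume.prod volume) := by
    intro u v
    have i1 : Integrable (fun p : ℝ × ℝ => ‖(u : ℝ → ℂ) p.2‖ ^ 2 * g H (p.1 - p.2)) (volume.prod volume) :=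
      (sq_int u).convolution_integrand (ContinuousLinearMap.mul ℝ ℝ) (g_int hH)
    have i2 : Integrable (fun p : ℝ × ℝ => ‖(v : ℝ → ℂ) p.1‖ ^ 2 * g H (p.2 - p.1)) (volume.prod volume) :=
      ((sq_int v).convolution_integrand (ContinuousLinearMap.mul ℝ ℝ) (g_int hH)).swap
    refine ((i1.add i2).const_mul C).mono' ?_ (Filter.Eventually.of_forall fun p => ?_)
    · refine AEStronglyMeasurable.mul ?_ (Lp.aestronglyMeasurable v).comp_fst
      exact Complex.continuous_conj.comp_aestronglyMeasurable
        (hK.meas.aestronglyMeasurable.mul (Lp.aestronglyMeasurable u).comp_snd)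
    · simp only [Function.uncurry, Pi.add_apply, norm_mul, RCLike.norm_conj]
      have h1 := hK.bd p.1 p.2
      have h3 := g_nonneg hH (p.1 - p.2)
      rw [g_sub H p.2 p.1]
      calc _ ≤ C * g H (p.1 - p.2) * ‖(u : ℝ → ℂ) p.2‖ * ‖(v : ℝ → ℂ) p.1‖ := by gcongr
        _ = C * g H (p.1 - p.2) * (‖(u : ℝ → ℂ) p.2‖ * ‖(v : ℝ → ℂ) p.1‖) := by ring
        _ ≤ C * g H (p.1 - p.2) * (‖(u : ℝ → ℂ) p.2‖ ^ 2 + ‖(v : ℝ → ℂ) p.1‖ ^ 2) := by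
          gcongr
          nlinarith [sq_nonneg (‖(u : ℝ → ℂ) p.2‖ - ‖(v : ℝ → ℂ) p.1‖), sq_nonneg ‖(u : ℝ → ℂ) p.2‖, sq_nonneg ‖(v : ℝ → ℂ) p.1‖]
        _ = _ := by ring
  symm
  rw [ContinuousLinearMap.eq_adjoint_iff]
  intro u v
  rw [L2.inner_def, L2.inner_def]
  have l : ∫ y, inner ℂ ((T u : ℝ → ℂ) y) ((v : ℝ → ℂ) y) =
      ∫ y, ∫ z, starRingEnd ℂ (K y z * (u : ℝ → ℂ) z) * (v : ℝ → ℂ) y := by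
    refine integral_congr_ae ?_
    filter_upwards [hT u] with y hy
    rw [hy, RCLike.inner_apply, integral_mul_const, integral_conj, mul_comm]
  have r : ∫ y, inner ℂ ((u : ℝ → ℂ) y) ((T v : ℝ → ℂ) y) =
      ∫ z, ∫ y, starRingEnd ℂ (K y z * (u : ℝ → ℂ) z) * (v : ℝ → ℂ) y := by
    refine integral_congr_ae ?_
    filter_upwards [hT v] with z hz
    rw [hz, RCLike.inner_apply, ← integral_mul_const]
    congr 1; funext y
    rw [hs z y, map_mul]; ring
  rw [l, r, integral_integral_swap (hI u v)]

end WL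

namespace WL

def cx (a : ℝ × ℝ → ℝ) : ℝ × ℝ → ℂ := fun p => ((a p : ℝ) : ℂ)

def Kb (b : ℝ × ℝ → ℂ) (H y z : ℝ) : ℂ := (H : ℂ)⁻¹ * F b ((y + z) / 2) ((y - z) / H)

lemma cx_CS {a : ℝ × ℝ → ℝ} (h : ContDiff ℝ (⊤ : ℕ∞) a) (h' : HasCompactSupport a) : CS (cx a) := by
  refine ⟨Complex.ofRealCLM.contDiff.comp h, ?_⟩
  exact h'.comp_left (g := fun r : ℝ => (r : ℂ)) (by simp)

lemma cx_tsupport (a : ℝ × ℝ → ℝ) : tsupport (cx a) = tsupport a := by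
  unfold tsupport
  congr 1
  ext p; simp [cx, Function.mem_support]

lemma kernel_eq {h : ℝ} (hh : 0 < h) (a j) (y z : ℝ) :
    weylKernel h (shiftSymbol a j) y z = Kb (sh (cx a) j) (2 * Real.pi * h) y z := by
  unfold weylKernel Kb F
  congr 1
  · push_cast; rw [one_div]
  · congr 1; funext η
    congr 2
    have : (Real.pi : ℂ) ≠ 0 := by exact_mod_cast Real.pi_ne_zero
    have h' : (h : ℂ) ≠ 0 := by exact_mod_cast hh.ne'
    push_cast
    field_simp

lemma Kb_symm (a : ℝ × ℝ → ℝ) (j H y z) :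
    Kb (sh (cx a) j) H y z = starRingEnd ℂ (Kb (sh (cx a) j) H z y) := by
  unfold Kb F
  rw [map_mul, ← integral_conj, map_inv₀, Complex.conj_ofReal]
  congr 2; funext η
  rw [map_mul, ← Complex.exp_conj]
  congr 2
  · simp only [map_mul, Complex.conj_ofReal, Complex.conj_I, map_ofNat]
    push_cast; ring
  · simp only [sh, cx, Complex.conj_ofReal, add_comm]

lemma g_bd {H c r : ℝ} (hH : 0 < H) {X : ℂ} (h : (1 + (r / H) ^ 2) * ‖X‖ ≤ c) :
    ‖(H : ℂ)⁻¹ * X‖ ≤ c * g H r := by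
  rw [norm_mul, norm_inv, Complex.norm_real, Real.norm_of_nonneg hH.le, g]
  have : ‖X‖ ≤ c * (1 + (r / H) ^ 2)⁻¹ := by
    rw [← div_eq_mul_inv, le_div_iff₀ (by positivity)]; linarith
  calc _ ≤ H⁻¹ * (c * (1 + (r / H) ^ 2)⁻¹) := by gcongr
    _ = _ := by ring

lemma Kb_KB {b} (hb : CS b) : ∃ C : ℝ, 0 ≤ C ∧ ∀ j H, 0 < H → KB (Kb (sh b j) H) H C := by
  obtain ⟨C, hC, h⟩ := F_decay 1 hb
  refine ⟨C, hC, fun j H hH => ⟨?_, fun y z => ?_⟩⟩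
  · refine continuous_const.mul ?_
    exact (F_cont (hb.sh j)).comp (by fun_prop : Continuous fun p : ℝ × ℝ => ((p.1 + p.2) / 2, (p.1 - p.2) / H))
  · refine g_bd hH ?_
    have := h ((y + z) / 2 - j.1) ((y - z) / H)
    rw [F_sh_norm]; simpa using this

lemma Kb_comp (b c : ℝ × ℝ → ℂ) {H : ℝ} (hH : 0 < H) (y z : ℝ) :
    ∫ w, Kb b H y w * Kb c H w z = (H : ℂ)⁻¹ * B b c H ((y + z) / 2) ((y - z) / H) := by
  have e := Measure.integral_comp_mul_left (fun w => Kb b H y (w + z) * Kb c H (w + z) z) H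
  rw [integral_add_right_eq_self (fun w => Kb b H y w * Kb c H w z) z] at e
  have hHc : (H : ℂ) ≠ 0 := by exact_mod_cast hH.ne'
  have e2 : ∀ s, Kb b H y (H * s + z) * Kb c H (H * s + z) z =
      ((H : ℂ)⁻¹ * (H : ℂ)⁻¹) * Bi b c H ((y + z) / 2) ((y - z) / H) s := by
    intro s
    unfold Kb Bi
    have a1 : (y + (H * s + z)) / 2 = (y + z) / 2 + H * s / 2 := by ring
    have a2 : (y - (H * s + z)) / H = (y - z) / H - s := by field_simp; ring
    have a3 : (H * s + z + z) / 2 = (y + z) / 2 - H * ((y - z) / H - s) / 2 := by field_simp; ring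
    have a4 : (H * s + z - z) / H = s := by field_simp; ring
    rw [a1, a2, a3, a4]; ring
  simp only [e2] at e
  rw [integral_const_mul, abs_of_pos (inv_pos.2 hH), Complex.real_smul] at e
  unfold B
  push_cast at e
  field_simp at e ⊢
  exact e.symm

lemma toKer {h : ℝ} (hh : 0 < h) {a j T} (hT : IsWeylQuant h (shiftSymbol a j) T) :
    IsKer (Kb (sh (cx a) j) (2 * Real.pi * h)) T := by
  intro u
  refine (hT u).trans (Filter.Eventually.of_forall fun y => ?_)
  simp only [kernel_eq hh]

lemma E_self {a} (ha : CS (cx a)) : ∃ C : ℝ, 0 ≤ C ∧ ∀ h j T, 0 < h →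
    IsWeylQuant h (shiftSymbol a j) T → star T = T ∧ ‖T‖ ≤ C := by
  obtain ⟨C, hC, hK⟩ := Kb_KB ha
  refine ⟨C * Real.pi, by positivity, fun h j T hh hT => ?_⟩
  have hH : 0 < 2 * Real.pi * h := by positivity
  exact ⟨isKer_symm (toKer hh hT) (hK j _ hH) hH hC (Kb_symm a j _),
    schur (toKer hh hT) hH hC (hK j _ hH).bd⟩

lemma opcomp {a b} (ha : CS (cx a)) (hb : CS (cx b)) {h c : ℝ} (hh : 0 < h) (hc : 0 ≤ c) {j k T S}
    (hT : IsWeylQuant h (shiftSymbol a j) T) (hS : IsWeylQuant h (shiftSymbol b k) S)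
    (hB : ∀ x t, (1 + t ^ 2) * ‖B (sh (cx a) j) (sh (cx b) k) (2 * Real.pi * h) x t‖ ≤ c) :
    ‖T * S‖ ≤ c * Real.pi := by
  obtain ⟨C, hC, hK⟩ := Kb_KB ha
  obtain ⟨C', hC', hK'⟩ := Kb_KB hb
  have hH : 0 < 2 * Real.pi * h := by positivity
  refine schur (isKer_comp (toKer hh hT) (toKer hh hS) (hK j _ hH) (hK' k _ hH) hH).1 hH hc fun y z => ?_
  rw [Kb_comp _ _ hH]
  exact g_bd hH (hB _ _)

lemma E_dec {a b} (ha : CS (cx a)) (hb : CS (cx b)) (p : ℕ) : ∃ C : ℝ, 0 ≤ C ∧ ∀ h j k T S, 0 < h → h < 1 →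
    IsWeylQuant h (shiftSymbol a j) T → IsWeylQuant h (shiftSymbol b k) S →
    W (j - k) ^ p * ‖T * S‖ ≤ C := by
  obtain ⟨C, hC, hd⟩ := decay ha hb p
  refine ⟨C * Real.pi, by positivity, fun h j k T S hh hh1 hT hS => ?_⟩
  have hW : 0 < W (j - k) := by unfold W; positivity
  have hH7 : 2 * Real.pi * h ≤ 7 := by nlinarith [Real.pi_lt_d2, Real.pi_pos]
  have := opcomp ha hb hh (c := C / W (j - k) ^ p) (by positivity) hT hS fun x t => by
    rw [le_div_iff₀ (by positivity), mul_comm]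
    exact hd j k _ x t (by positivity) hH7
  calc _ ≤ W (j - k) ^ p * (C / W (j - k) ^ p * Real.pi) := by gcongr
    _ = _ := by field_simp

lemma E_small {a b} (ha : CS (cx a)) (hb : CS (cx b)) (n : ℕ)
    (hS : ∀ j k : ℤ × ℤ, j ≠ k → Disjoint (tsupport (sh (cx a) j)) (tsupport (sh (cx b) k))) :
    ∃ C : ℝ, 0 ≤ C ∧ ∀ h j k T S, 0 < h → j ≠ k →
    IsWeylQuant h (shiftSymbol a j) T → IsWeylQuant h (shiftSymbol b k) S →
    ‖T * S‖ ≤ C * h ^ n := by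
  obtain ⟨C, hC, hd⟩ := small n ha hb (fun j k => j ≠ k) hS
  refine ⟨C * (2 * Real.pi) ^ n * Real.pi, by positivity, fun h j k T S hh hjk hT hS => ?_⟩
  have := opcomp ha hb hh (c := C * (2 * Real.pi * h) ^ n) (by positivity) hT hS fun x t =>
    hd j k hjk _ x t (by positivity)
  refine this.trans (le_of_eq ?_)
  rw [mul_pow]; ring

lemma E_one {χ a} (hχ : CS (cx χ)) (ha : CS (cx a)) (n : ℕ) (U : Set (ℝ × ℝ)) (hU : IsOpen U)
    (haU : tsupport (cx a) ⊆ U) (h1 : ∀ p ∈ U, cx χ p = 1) :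
    ∃ C : ℝ, 0 ≤ C ∧ ∀ h j P T, 0 < h → h < 1 →
    IsWeylQuant h (shiftSymbol χ j) P → IsWeylQuant h (shiftSymbol a j) T →
    ‖P * T - T‖ ≤ C * h ^ n := by
  obtain ⟨C, hC, hd⟩ := small' n hχ ha U hU haU h1
  obtain ⟨C1, hC1, hK1⟩ := Kb_KB hχ
  obtain ⟨C2, hC2, hK2⟩ := Kb_KB ha
  refine ⟨C * (2 * Real.pi) ^ (n + 1) * Real.pi, by positivity, fun h j P T hh hh1 hP hT => ?_⟩
  have hH : 0 < 2 * Real.pi * h := by positivity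
  have kc := isKer_comp (toKer hh hP) (toKer hh hT) (hK1 j _ hH) (hK2 j _ hH) hH
  have := schur (isKer_sub kc.1 (toKer hh hT) kc.2 (fun u y => (hK2 j _ hH).int hH u y)) hH
    (C := C * (2 * Real.pi * h) ^ (n + 1)) (by positivity) fun y z => by
      rw [Kb_comp _ _ hH, Kb, ← mul_sub]
      exact g_bd hH (hd j _ _ _ hH.le)
  refine this.trans ?_
  rw [mul_pow]
  have : h ^ (n + 1) ≤ h ^ n := pow_le_pow_of_le_one hh.le hh1.le (Nat.le_succ n)
  calc _ = C * (2 * Real.pi) ^ (n + 1) * Real.pi * h ^ (n + 1) := by ring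
    _ ≤ _ := by gcongr

lemma cells {a b : ℝ × ℝ → ℝ}
    (ha : tsupport a ⊆ Set.Ioo (-(1/2) : ℝ) (1/2) ×ˢ Set.Ioo (-(1/2) : ℝ) (1/2))
    (hb : tsupport b ⊆ Set.Ioo (-(1/2) : ℝ) (1/2) ×ˢ Set.Ioo (-(1/2) : ℝ) (1/2))
    (j k : ℤ × ℤ) (hjk : j ≠ k) : Disjoint (tsupport (sh (cx a) j)) (tsupport (sh (cx b) k)) := by
  rw [Set.disjoint_left]
  intro p h1 h2
  have h1' := ts_sh _ _ _ h1
  have h2' := ts_sh _ _ _ h2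
  rw [cx_tsupport] at h1' h2'
  obtain ⟨⟨a1, a2⟩, a3, a4⟩ := ha h1'
  obtain ⟨⟨b1, b2⟩, b3, b4⟩ := hb h2'
  simp only at a1 a2 a3 a4 b1 b2 b3 b4
  apply hjk
  have aux : ∀ m n : ℤ, ((m : ℝ) - n < 1) → ((n : ℝ) - m < 1) → m = n := by
    intro m n h h'
    have g1 : m - n < 1 := by exact_mod_cast h
    have g2 : n - m < 1 := by exact_mod_cast h'
    omega
  exact Prod.ext (aux _ _ (by linarith) (by linarith)) (aux _ _ (by linarith) (by linarith))

end WL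

namespace WL

lemma pow_cmp {s A B : ℝ} (hA : 0 ≤ A) (hB0 : 0 ≤ B) (hs : 0 ≤ s)
    (bd2 : ∀ k : ℕ, s ^ (2 * 2 ^ k) ≤ B * s * A ^ (2 * (2 ^ k - 1))) : s ≤ A := by
  by_contra! hlt
  have hSpos : 0 < s := hA.trans_lt hlt
  obtain ⟨r, hr1, hr2⟩ := exists_between hlt
  have hr0 : 0 < r := hA.trans_lt hr1
  have b3 : ∀ k : ℕ, (s / r) ^ (2 * (2 ^ k - 1)) ≤ B / s := by
    intro k
    have e : 2 * 2 ^ k = 2 * (2 ^ k - 1) + 2 := by have := Nat.one_le_two_pow (n := k); omega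
    have h := bd2 k
    rw [e, pow_add] at h
    generalize 2 * (2 ^ k - 1) = m at *
    have h' : A ^ m ≤ r ^ m := by gcongr
    rw [div_pow, div_le_div_iff₀ (by positivity) hSpos]
    have : s ^ m * s * s ≤ B * r ^ m * s := by
      calc _ = s ^ m * s ^ 2 := by ring
        _ ≤ _ := h
        _ ≤ B * s * r ^ m := by gcongr
        _ = _ := by ring
    exact le_of_mul_le_mul_right this hSpos
  have h1r : 1 < s / r := (one_lt_div hr0).2 hr2
  obtain ⟨n, hn⟩ := pow_unbounded_of_one_lt (B / s) h1r
  have : n ≤ 2 * (2 ^ n - 1) := by have := Nat.lt_two_pow_self (n := n); omega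
  exact absurd (b3 n) (not_le.2 (hn.trans_le (pow_le_pow_right₀ h1r.le this)))

section cotlar
variable {E : Type*} [NormedAddCommGroup E] [InnerProductSpace ℂ E] [CompleteSpace E]

lemma cotlar_step {ι : Type} [Fintype ι] (X : ι → E →L[ℂ] E) {A M : ℝ} (hA : 0 ≤ A) (hM : 0 ≤ M)
    (hXM : ∀ k, ‖X k‖ ≤ M)
    (h1 : ∀ k, ∑ l, √‖star (X l) * X k‖ ≤ A)
    (h2 : ∀ k, ∑ l, √‖X k * star (X l)‖ ≤ A) (n : ℕ) :
    ∃ (I : Type) (_ : Fintype I) (Z : I → E →L[ℂ] E) (α : I → ℝ) (γ : I → ι → ℝ),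
      (star (∑ k, X k) * ∑ k, X k) ^ n = ∑ i, Z i ∧ (∀ i, ‖Z i‖ ≤ α i) ∧
      (∀ i m, ‖X m * Z i‖ ≤ γ i m) ∧ (∀ i, 0 ≤ α i) ∧ (∀ i m, 0 ≤ γ i m) ∧
      ∀ m, ∑ i, √(α i) * √(γ i m) ≤ A ^ (2 * n) * √M := by
  induction n with
  | zero =>
    refine ⟨Unit, inferInstance, fun _ => 1, fun _ => 1, fun _ m => ‖X m‖, by simp, ?_, ?_, ?_, ?_, ?_⟩
    · intro _; exact ContinuousLinearMap.norm_id_le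
    · intro _ m; simp
    · intro _; norm_num
    · intro _ m; positivity
    · intro m; simpa using Real.sqrt_le_sqrt (hXM m)
  | succ n ih =>
    obtain ⟨I, _, Z, α, γ, e, hZ, hXZ, hα, hγ, hs⟩ := ih
    refine ⟨ι × ι × I, inferInstance, fun p => star (X p.1) * X p.2.1 * Z p.2.2,
      fun p => ‖star (X p.1) * X p.2.1‖ * α p.2.2, fun p m => ‖X m * star (X p.1)‖ * γ p.2.2 p.2.1,
      ?_, ?_, ?_, ?_, ?_, ?_⟩
    · rw [pow_succ', e, star_sum, Finset.sum_mul_sum]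
      simp only [Fintype.sum_prod_type, Finset.sum_mul]
      refine Finset.sum_congr rfl fun k _ => Finset.sum_congr rfl fun l _ => ?_
      rw [Finset.mul_sum]
    · intro p
      exact (norm_mul_le _ _).trans (mul_le_mul_of_nonneg_left (hZ _) (norm_nonneg _))
    · intro p m
      calc _ = ‖(X m * star (X p.1)) * (X p.2.1 * Z p.2.2)‖ := by simp only [mul_assoc]
        _ ≤ _ := (norm_mul_le _ _).trans (mul_le_mul_of_nonneg_left (hXZ _ _) (norm_nonneg _))
    · intro p; exact mul_nonneg (norm_nonneg _) (hα _)
    · intro p m; exact mul_nonneg (norm_nonneg _) (hγ _ _)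
    · intro m
      simp only [Fintype.sum_prod_type]
      calc _ = ∑ k, √‖X m * star (X k)‖ * ∑ l, √‖star (X k) * X l‖ * ∑ i, √(α i) * √(γ i l) := by
            refine Finset.sum_congr rfl fun k _ => ?_
            rw [Finset.mul_sum]
            refine Finset.sum_congr rfl fun l _ => ?_
            rw [Finset.mul_sum, Finset.mul_sum]
            refine Finset.sum_congr rfl fun i _ => ?_
            rw [Real.sqrt_mul (norm_nonneg _), Real.sqrt_mul (norm_nonneg _)]; ring
        _ ≤ ∑ k, √‖X m * star (X k)‖ * ∑ l, √‖star (X k) * X l‖ * (A ^ (2 * n) * √M) := by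
            gcongr with k _ l _
            exact hs l
        _ ≤ ∑ k, √‖X m * star (X k)‖ * (A * (A ^ (2 * n) * √M)) := by
            gcongr with k _
            rw [← Finset.sum_mul]
            gcongr
            refine le_trans (le_of_eq ?_) (h1 k)
            refine Finset.sum_congr rfl fun l _ => ?_
            rw [← norm_star, star_mul, star_star]
        _ ≤ A * (A * (A ^ (2 * n) * √M)) := by
            rw [← Finset.sum_mul]
            gcongr
            exact h2 m
        _ = _ := by ring

lemma cotlar {ι : Type} [Fintype ι] (X : ι → E →L[ℂ] E) {A : ℝ} (hA : 0 ≤ A)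
    (h1 : ∀ k, ∑ l, √‖star (X l) * X k‖ ≤ A)
    (h2 : ∀ k, ∑ l, √‖X k * star (X l)‖ ≤ A) : ‖∑ k, X k‖ ≤ A := by
  set S := ∑ k, X k with hS
  set M := ∑ k, ‖X k‖ with hM'
  have hM : 0 ≤ M := Finset.sum_nonneg fun _ _ => norm_nonneg _
  have hXM : ∀ k, ‖X k‖ ≤ M := fun k =>
    Finset.single_le_sum (f := fun k => ‖X k‖) (fun _ _ => norm_nonneg _) (Finset.mem_univ k)
  have key : ∀ n : ℕ, ∀ m, ‖X m * (star S * S) ^ n‖ ≤ M * A ^ (2 * n) := by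
    intro n m
    obtain ⟨I, _, Z, α, γ, e, hZ, hXZ, hα, hγ, hs⟩ := cotlar_step X hA hM hXM h1 h2 n
    rw [e, Finset.mul_sum]
    calc _ ≤ ∑ i, ‖X m * Z i‖ := norm_sum_le _ _
      _ ≤ ∑ i, √M * (√(α i) * √(γ i m)) := by
        gcongr with i _
        have a1 : ‖X m * Z i‖ ≤ M * α i :=
          (norm_mul_le _ _).trans (mul_le_mul (hXM m) (hZ i) (norm_nonneg _) hM)
        rw [← mul_assoc, ← Real.sqrt_mul hM, ← Real.sqrt_mul (mul_nonneg hM (hα i))]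
        refine Real.le_sqrt_of_sq_le ?_
        rw [sq]
        exact mul_le_mul a1 (hXZ i m) (norm_nonneg _) (mul_nonneg hM (hα i))
      _ ≤ √M * (A ^ (2 * n) * √M) := by
        rw [← Finset.mul_sum]; gcongr; exact hs m
      _ = (√M * √M) * A ^ (2 * n) := by ring
      _ = _ := by rw [Real.mul_self_sqrt hM]
  have pw : ∀ k : ℕ, ‖(star S * S) ^ (2 ^ k)‖ = ‖S‖ ^ (2 * 2 ^ k) := by
    intro k
    induction k with
    | zero => simp [CStarRing.norm_star_mul_self, sq]
    | succ k ih =>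
      have sa : star ((star S * S) ^ 2 ^ k) = (star S * S) ^ 2 ^ k := by simp
      rw [pow_succ 2 k, pow_mul, sq]
      nth_rw 1 [← sa]
      rw [CStarRing.norm_star_mul_self, ih]; ring
  have bd2 : ∀ k : ℕ, ‖S‖ ^ (2 * 2 ^ k) ≤ ((Fintype.card ι : ℝ) * M) * ‖S‖ * A ^ (2 * (2 ^ k - 1)) := by
    intro k
    rw [← pw k]
    have : 2 ^ k = (2 ^ k - 1) + 1 := by have := Nat.one_le_two_pow (n := k); omega
    have e : (star S * S) ^ (2 ^ k) = star S * ∑ m, X m * (star S * S) ^ (2 ^ k - 1) := by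
      rw [← Finset.sum_mul, ← hS, ← mul_assoc, ← pow_succ', ← this]
    rw [e]
    calc _ ≤ ‖S‖ * ∑ m, M * A ^ (2 * (2 ^ k - 1)) := by
          refine (norm_mul_le _ _).trans ?_
          rw [norm_star]
          gcongr
          refine (norm_sum_le _ _).trans ?_
          gcongr with m _
          exact key _ m
      _ = _ := by simp; ring
  exact pow_cmp hA (by positivity) (norm_nonneg _) bd2
end cotlar
end WL

namespace WL

lemma W_pos (d) : 0 < W d := by unfold W; positivity
lemma W_one (d) : 1 ≤ W d := by
  unfold W
  nlinarith [sq_nonneg (d.1 : ℝ), sq_nonneg (d.2 : ℝ), mul_nonneg (sq_nonneg (d.1 : ℝ)) (sq_nonneg (d.2 : ℝ))]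
lemma W_zero : W 0 = 1 := by simp [W]
lemma W_symm (a b) : W (a - b) = W (b - a) := by simp [W]; ring

lemma summ1 : Summable fun n : ℤ => (1 + (n : ℝ) ^ 2)⁻¹ := by
  have h := (Real.summable_one_div_int_pow (p := 2)).2 (by norm_num)
  refine Summable.of_norm_bounded_eventually h ?_
  refine (Set.finite_singleton (0 : ℤ)).subset fun n hn => ?_
  by_contra h0
  apply hn
  have : (n : ℝ) ≠ 0 := by exact_mod_cast h0
  show ‖(1 + (n : ℝ) ^ 2)⁻¹‖ ≤ 1 / (n : ℝ) ^ 2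
  rw [Real.norm_of_nonneg (by positivity), one_div]
  gcongr
  linarith

lemma Wsum : ∃ Z : ℝ, 0 ≤ Z ∧ ∀ (Λ : Finset (ℤ × ℤ)) (a : ℤ × ℤ), ∑ k : Λ, (W (a - k))⁻¹ ≤ Z := by
  have hs : Summable fun d : ℤ × ℤ => (W d)⁻¹ := by
    have := summ1.mul_of_nonneg summ1 (fun n => by positivity) (fun n => by positivity)
    refine this.congr fun d => ?_
    simp [W, mul_comm]
  refine ⟨∑' d, (W d)⁻¹, tsum_nonneg fun d => (inv_pos.2 (W_pos d)).le, fun Λ a => ?_⟩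
  rw [Finset.sum_coe_sort Λ (fun k => (W (a - k))⁻¹)]
  rw [← Finset.sum_image (f := fun d => (W d)⁻¹) (g := fun k => a - k) (fun x _ y _ h => sub_right_injective h)]
  exact hs.sum_le_tsum _ fun d _ => (inv_pos.2 (W_pos d)).le

lemma gm {x a b : ℝ} (hx : 0 ≤ x) (hb : 0 ≤ b) (h1 : x ≤ a) (h2 : x ≤ b) {c : ℝ} (hc : 0 ≤ c) (h : a * b = c ^ 2) : x ≤ c := by
  have : x ^ 2 ≤ c ^ 2 := by
    rw [← h, sq]; exact mul_le_mul h1 h2 hx (hx.trans h1)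
  exact abs_le_of_sq_le_sq' this hc |>.2

section fin
variable {E : Type*} [NormedAddCommGroup E] [InnerProductSpace ℂ E] [CompleteSpace E]

/-- the almost orthogonal pieces -/
def XX (P T : ℤ × ℤ → E →L[ℂ] E) (j k : ℤ × ℤ) : E →L[ℂ] E :=
  P j * T k - if j = k then T k else 0

structure Hyp (P T : ℤ × ℤ → E →L[ℂ] E) (K δ : ℝ) : Prop where
  K1 : 1 ≤ K
  δ0 : 0 < δ
  δ1 : δ ≤ 1
  sP : ∀ j, star (P j) = P j
  sT : ∀ j, star (T j) = T j
  nP : ∀ j, ‖P j‖ ≤ K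
  nT : ∀ j, ‖T j‖ ≤ K
  PP : ∀ j k, ‖P j * P k‖ ≤ K / W (j - k) ^ 8
  PT : ∀ j k, ‖P j * T k‖ ≤ K / W (j - k) ^ 8
  TP : ∀ j k, ‖T j * P k‖ ≤ K / W (j - k) ^ 8
  TT : ∀ j k, ‖T j * T k‖ ≤ K / W (j - k) ^ 8
  sm : ∀ j k, j ≠ k → ‖P j * T k‖ ≤ K * δ ^ 8
  one : ∀ j, ‖P j * T j - T j‖ ≤ K * δ ^ 8

variable {P T : ℤ × ℤ → E →L[ℂ] E} {K δ : ℝ}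

lemma div_W_le {K : ℝ} (hK : 0 ≤ K) (d) : K / W d ^ 8 ≤ K / W d ^ 4 := by
  have h1 := W_one d
  exact div_le_div_of_nonneg_left hK (by positivity) (pow_le_pow_right₀ h1 (by norm_num))

lemma X_small (H : Hyp P T K δ) (j k) : ‖XX P T j k‖ ≤ (2 * K) * δ ^ 4 / W (j - k) ^ 4 := by
  have hW := W_pos (j - k)
  have hK := H.K1
  have hδ := H.δ0
  by_cases h : j = k
  · subst h
    simp only [XX, if_true, sub_self, W_zero]
    have : δ ^ 8 ≤ δ ^ 4 := pow_le_pow_of_le_one hδ.le H.δ1 (by norm_num)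
    have h1 := H.one j
    have h2 : K * δ ^ 8 ≤ K * δ ^ 4 := by gcongr
    have : 0 ≤ K * δ ^ 4 := by positivity
    norm_num; linarith
  · simp only [XX, h, if_false, sub_zero]
    have := gm (norm_nonneg _) (by positivity) (H.sm j k h) (H.PT j k) (c := K * δ ^ 4 / W (j - k) ^ 4)
      (by positivity) (by field_simp)
    refine this.trans ?_
    gcongr; linarith

lemma X_norm (H : Hyp P T K δ) (j k) : ‖XX P T j k‖ ≤ 2 * K := by
  have hK := H.K1
  refine (X_small H j k).trans ?_
  rw [div_le_iff₀ (by have := W_pos (j - k); positivity)]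
  have h1 : δ ^ 4 ≤ 1 := pow_le_one₀ H.δ0.le H.δ1
  have h2 : 1 ≤ W (j - k) ^ 4 := one_le_pow₀ (W_one _)
  have : 0 < δ ^ 4 := by have := H.δ0; positivity
  exact mul_le_mul_of_nonneg_left (h1.trans h2) (by linarith)

lemma XX1 (H : Hyp P T K δ) (j k j' k') :
    ‖star (XX P T j k) * XX P T j' k'‖ ≤ 4 * K ^ 3 / W (j - j') ^ 4 := by
  have hK := H.K1
  have hK0 : 0 ≤ K := by linarith
  have hW := W_pos (j - j')
  set e : E →L[ℂ] E := if j = k then T k else 0 with he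
  set e' : E →L[ℂ] E := if j' = k' then T k' else 0 with he'
  have se : star e = e := by
    rw [he]; split_ifs
    · exact H.sT k
    · exact star_zero _
  have ne : ‖e‖ ≤ K := by
    rw [he]; split_ifs
    · exact H.nT k
    · simpa using hK0
  have ex : star (XX P T j k) * XX P T j' k' =
      T k * (P j * P j') * T k' - T k * (P j * e') - (e * P j') * T k' + e * e' := by
    unfold XX
    rw [← he, ← he', star_sub, star_mul, H.sP, H.sT, se]
    noncomm_ring
  have b1 : ‖T k * (P j * P j') * T k'‖ ≤ K ^ 3 / W (j - j') ^ 4 := by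
    calc _ ≤ ‖T k‖ * ‖P j * P j'‖ * ‖T k'‖ := (norm_mul_le _ _).trans
            (mul_le_mul_of_nonneg_right (norm_mul_le _ _) (norm_nonneg _))
      _ ≤ K * (K / W (j - j') ^ 4) * K := by
        gcongr
        · exact H.nT k
        · exact (H.PP j j').trans (div_W_le hK0 _)
        · exact H.nT k'
      _ = _ := by ring
  have b2 : ‖T k * (P j * e')‖ ≤ K ^ 3 / W (j - j') ^ 4 := by
    have : ‖P j * e'‖ ≤ K / W (j - j') ^ 4 := by
      rw [he']; split_ifs with h
      · subst h; exact (H.PT j j').trans (div_W_le hK0 _)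
      · rw [mul_zero, norm_zero]; positivity
    calc _ ≤ ‖T k‖ * ‖P j * e'‖ := norm_mul_le _ _
      _ ≤ K * (K / W (j - j') ^ 4) := by
        gcongr
        exact H.nT k
      _ = K ^ 2 / W (j - j') ^ 4 := by ring
      _ ≤ _ := by gcongr <;> norm_num
  have b3 : ‖(e * P j') * T k'‖ ≤ K ^ 3 / W (j - j') ^ 4 := by
    have : ‖e * P j'‖ ≤ K / W (j - j') ^ 4 := by
      rw [he]; split_ifs with h
      · subst h; exact (H.TP j j').trans (div_W_le hK0 _)
      · rw [zero_mul, norm_zero]; positivity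
    calc _ ≤ ‖e * P j'‖ * ‖T k'‖ := norm_mul_le _ _
      _ ≤ (K / W (j - j') ^ 4) * K := by
        gcongr
        exact H.nT k'
      _ = K ^ 2 / W (j - j') ^ 4 := by ring
      _ ≤ _ := by gcongr <;> norm_num
  have b4 : ‖e * e'‖ ≤ K ^ 3 / W (j - j') ^ 4 := by
    have : ‖e * e'‖ ≤ K / W (j - j') ^ 4 := by
      rw [he, he']; split_ifs with h h' h'
      · subst h; subst h'; exact (H.TT j j').trans (div_W_le hK0 _)
      all_goals simp only [mul_zero, zero_mul, norm_zero]; positivity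
    calc _ ≤ K ^ 1 / W (j - j') ^ 4 := by rwa [pow_one]
      _ ≤ _ := by gcongr; norm_num
  rw [ex]
  calc _ ≤ ‖T k * (P j * P j') * T k'‖ + ‖T k * (P j * e')‖ + ‖(e * P j') * T k'‖ + ‖e * e'‖ :=
        (norm_add_le _ _).trans (add_le_add_left ((norm_sub_le _ _).trans
          (add_le_add_left (norm_sub_le _ _) _)) _)
    _ ≤ K ^ 3 / W (j - j') ^ 4 + K ^ 3 / W (j - j') ^ 4 + K ^ 3 / W (j - j') ^ 4 + K ^ 3 / W (j - j') ^ 4 := by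
        gcongr
    _ = _ := by ring

lemma XX2 (H : Hyp P T K δ) (j k j' k') :
    ‖XX P T j k * star (XX P T j' k')‖ ≤ 4 * K ^ 3 / W (k - k') ^ 4 := by
  have hK := H.K1
  have hK0 : 0 ≤ K := by linarith
  have hW := W_pos (k - k')
  have fac : ∀ j k, ∃ R : E →L[ℂ] E, ‖R‖ ≤ 2 * K ∧ XX P T j k = R * T k := by
    intro j k
    by_cases h : j = k
    · refine ⟨P j - 1, (norm_sub_le _ _).trans ?_, ?_⟩
      · have : ‖(1 : E →L[ℂ] E)‖ ≤ 1 := ContinuousLinearMap.norm_id_le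
        linarith [H.nP j]
      · simp [XX, h, sub_mul]
    · exact ⟨P j, by linarith [H.nP j], by simp [XX, h]⟩
  obtain ⟨R, hR, e⟩ := fac j k
  obtain ⟨R', hR', e'⟩ := fac j' k'
  rw [e, e', star_mul, H.sT]
  calc _ = ‖R * (T k * T k') * star R'‖ := by simp only [mul_assoc]
    _ ≤ ‖R‖ * ‖T k * T k'‖ * ‖star R'‖ := (norm_mul_le _ _).trans
            (mul_le_mul_of_nonneg_right (norm_mul_le _ _) (norm_nonneg _))
    _ ≤ (2 * K) * (K / W (k - k') ^ 4) * (2 * K) := by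
      rw [norm_star]
      gcongr
      exact (H.TT k k').trans (div_W_le hK0 _)
    _ = _ := by ring

lemma sq_bd {x M δ w v : ℝ} (hx : 0 ≤ x) (hM : 0 ≤ M) (hδ : 0 < δ) (hw : 0 < w) (hv : 0 < v)
    (h1 : x ≤ M * δ ^ 4 / w ^ 4) (h2 : x ≤ M / v ^ 4) : √x ≤ √M * δ * (w⁻¹ * v⁻¹) := by
  have := gm hx (by positivity) h1 h2 (c := M * (δ * (w⁻¹ * v⁻¹)) ^ 2) (by positivity) (by field_simp)
  calc _ ≤ √(M * (δ * (w⁻¹ * v⁻¹)) ^ 2) := Real.sqrt_le_sqrt this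
    _ = _ := by rw [Real.sqrt_mul hM, Real.sqrt_sq (by positivity)]; ring

lemma final {Z : ℝ} (hZ0 : 0 ≤ Z) (hZ : ∀ (Λ : Finset (ℤ × ℤ)) (a : ℤ × ℤ), ∑ k : Λ, (W (a - k))⁻¹ ≤ Z)
    (H : Hyp P T K δ) (Λ : Finset (ℤ × ℤ)) :
    (∀ j ∈ Λ, ‖P j * (∑ k ∈ Λ, T k) - T j‖ ≤ (2 * K * Z) * δ) ∧
    ‖(1 - ∑ k ∈ Λ, P k) * (∑ k ∈ Λ, T k)‖ ≤ (√(4 * K ^ 3) * Z ^ 2) * δ := by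
  have hK := H.K1
  have hK0 : 0 ≤ K := by linarith
  have hδ := H.δ0
  constructor
  · intro j hj
    have e : P j * (∑ k ∈ Λ, T k) - T j = ∑ k : Λ, XX P T j k := by
      rw [Finset.sum_coe_sort Λ (fun k => XX P T j k)]
      simp only [XX, Finset.sum_sub_distrib, Finset.mul_sum, Finset.sum_ite_eq, hj, if_true]
    rw [e]
    calc _ ≤ ∑ k : Λ, (2 * K) * δ * (W (j - k))⁻¹ := by
          refine (norm_sum_le _ _).trans (Finset.sum_le_sum fun k _ => (X_small H j k).trans ?_)
          have h1 := W_one (j - k)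
          have h0 := W_pos (j - k)
          rw [div_eq_mul_inv]
          have g1 : δ ^ 4 ≤ δ := pow_le_of_le_one hδ.le H.δ1 (by norm_num)
          have g2 : W (j - k) ≤ W (j - k) ^ 4 := le_self_pow₀ h1 (by norm_num)
          gcongr
      _ ≤ (2 * K) * δ * Z := by
          rw [← Finset.mul_sum]; gcongr; exact hZ Λ j
      _ = _ := by ring
  · set Y : Λ × Λ → E →L[ℂ] E := fun p => XX P T p.1 p.2 with hY
    have e : (1 - ∑ k ∈ Λ, P k) * (∑ k ∈ Λ, T k) = -∑ p, Y p := by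
      rw [Fintype.sum_prod_type]
      simp only [hY]
      have : ∑ x : Λ, ∑ y : Λ, XX P T x y = ∑ x ∈ Λ, ∑ y ∈ Λ, XX P T x y := by
        rw [← Finset.sum_coe_sort Λ]
        refine Finset.sum_congr rfl fun x _ => ?_
        rw [Finset.sum_coe_sort Λ (fun y => XX P T x y)]
      rw [this, sub_mul, one_mul, Finset.sum_mul_sum]
      simp only [XX, Finset.sum_sub_distrib, Finset.sum_ite_eq]
      rw [Finset.sum_congr rfl (fun x hx => if_pos hx : ∀ x ∈ Λ, (if x ∈ Λ then T x else 0) = T x)]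
      abel
    have pr : ∀ p q : Λ × Λ, ‖Y p‖ * ‖Y q‖ ≤ 4 * K ^ 3 * δ ^ 4 / W ((q.1 : ℤ × ℤ) - q.2) ^ 4 := by
      intro p q
      have hW := W_pos ((q.1 : ℤ × ℤ) - q.2)
      calc _ ≤ (2 * K) * ((2 * K) * δ ^ 4 / W ((q.1 : ℤ × ℤ) - q.2) ^ 4) := by
            gcongr
            · exact X_norm H _ _
            · exact X_small H _ _
        _ = 4 * K ^ 2 * δ ^ 4 / W ((q.1 : ℤ × ℤ) - q.2) ^ 4 := by ring
        _ ≤ _ := by gcongr <;> norm_num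
    rw [e, norm_neg]
    refine cotlar Y (by positivity) (fun p => ?_) (fun p => ?_)
    · calc _ ≤ ∑ q : Λ × Λ, √(4 * K ^ 3) * δ * ((W ((q.1 : ℤ × ℤ) - q.2))⁻¹ * (W ((p.1 : ℤ × ℤ) - q.1))⁻¹) := by
            refine Finset.sum_le_sum fun q _ => ?_
            refine sq_bd (norm_nonneg _) (by positivity) hδ (W_pos _) (W_pos _) ?_ ?_
            · refine (norm_mul_le _ _).trans ?_
              rw [norm_star, mul_comm]; exact pr p q
            · rw [W_symm]; exact XX1 H _ _ _ _
        _ = √(4 * K ^ 3) * δ * ∑ j : Λ, (W ((p.1 : ℤ × ℤ) - j))⁻¹ * ∑ k : Λ, (W ((j : ℤ × ℤ) - k))⁻¹ := by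
            rw [← Finset.mul_sum, Fintype.sum_prod_type]
            simp only [Finset.mul_sum]
            refine Finset.sum_congr rfl fun j _ => Finset.sum_congr rfl fun k _ => by ring
        _ ≤ √(4 * K ^ 3) * δ * ∑ j : Λ, (W ((p.1 : ℤ × ℤ) - j))⁻¹ * Z := by
            gcongr with j _
            · exact (inv_pos.2 (W_pos _)).le
            · exact hZ Λ _
        _ ≤ √(4 * K ^ 3) * δ * (Z * Z) := by
            rw [← Finset.sum_mul]
            gcongr
            exact hZ Λ _
        _ = _ := by ring
    · calc _ ≤ ∑ q : Λ × Λ, √(4 * K ^ 3) * δ * ((W ((q.1 : ℤ × ℤ) - q.2))⁻¹ * (W ((p.2 : ℤ × ℤ) - q.2))⁻¹) := by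
            refine Finset.sum_le_sum fun q _ => ?_
            refine sq_bd (norm_nonneg _) (by positivity) hδ (W_pos _) (W_pos _) ?_ ?_
            · refine (norm_mul_le _ _).trans ?_
              rw [norm_star]; exact pr p q
            · exact XX2 H _ _ _ _
        _ = √(4 * K ^ 3) * δ * ∑ k : Λ, (W ((p.2 : ℤ × ℤ) - k))⁻¹ * ∑ j : Λ, (W ((k : ℤ × ℤ) - j))⁻¹ := by
            rw [← Finset.mul_sum, Fintype.sum_prod_type_right]
            simp only [Finset.mul_sum]
            refine Finset.sum_congr rfl fun j _ => Finset.sum_congr rfl fun k _ => by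
              rw [W_symm (j : ℤ × ℤ) k]; ring
        _ ≤ √(4 * K ^ 3) * δ * ∑ j : Λ, (W ((p.2 : ℤ × ℤ) - j))⁻¹ * Z := by
            gcongr with j _
            · exact (inv_pos.2 (W_pos _)).le
            · exact hZ Λ _
        _ ≤ √(4 * K ^ 3) * δ * (Z * Z) := by
            rw [← Finset.sum_mul]
            gcongr
            exact hZ Λ _
        _ = _ := by ring
end fin
end WL

theorem weyl_single_site_localization
    (a₀ χ₀ : ℝ × ℝ → ℝ)
    (ha_smooth : ContDiff ℝ (⊤ : ℕ∞) a₀) (ha_supp : HasCompactSupport a₀)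
    (ha_supp' : tsupport a₀ ⊆
      Set.Ioo (-(1/2) : ℝ) (1/2) ×ˢ Set.Ioo (-(1/2) : ℝ) (1/2))
    (hχ_smooth : ContDiff ℝ (⊤ : ℕ∞) χ₀) (hχ_supp : HasCompactSupport χ₀)
    (hχ_supp' : tsupport χ₀ ⊆
      Set.Ioo (-(1/2) : ℝ) (1/2) ×ˢ Set.Ioo (-(1/2) : ℝ) (1/2))
    (hχ_one : ∃ U : Set (ℝ × ℝ), IsOpen U ∧ tsupport a₀ ⊆ U ∧
      ∀ p ∈ U, χ₀ p = 1) :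
    ∀ N : ℝ, 0 < N → ∃ C : ℝ, 0 < C ∧
      ∀ h : ℝ, 0 < h → h < 1 →
        ∀ (Λ : Finset (ℤ × ℤ)) (T P : ℤ × ℤ → (L2R →L[ℂ] L2R)),
          (∀ j : ℤ × ℤ, IsWeylQuant h (shiftSymbol a₀ j) (T j)) →
          (∀ j : ℤ × ℤ, IsWeylQuant h (shiftSymbol χ₀ j) (P j)) →
          ∀ j ∈ Λ,
            ‖(P j).comp (∑ k ∈ Λ, T k) - T j‖ ≤ C * h ^ N ∧
            ‖((1 : L2R →L[ℂ] L2R) - ∑ k ∈ Λ, P k).comp (∑ k ∈ Λ, T k)‖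
              ≤ C * h ^ N := by
  intro N hN
  have hb : WL.CS (WL.cx a₀) := WL.cx_CS ha_smooth ha_supp
  have hc : WL.CS (WL.cx χ₀) := WL.cx_CS hχ_smooth hχ_supp
  obtain ⟨U, hU, haU, hU1⟩ := hχ_one
  obtain ⟨n, hn⟩ := exists_nat_ge N
  obtain ⟨Z, hZ0, hZ⟩ := WL.Wsum
  obtain ⟨c1, hc1, e1⟩ := WL.E_self hb
  obtain ⟨c2, hc2, e2⟩ := WL.E_self hc
  obtain ⟨c3, hc3, e3⟩ := WL.E_dec hc hc 8
  obtain ⟨c4, hc4, e4⟩ := WL.E_dec hc hb 8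
  obtain ⟨c5, hc5, e5⟩ := WL.E_dec hb hc 8
  obtain ⟨c6, hc6, e6⟩ := WL.E_dec hb hb 8
  obtain ⟨c7, hc7, e7⟩ := WL.E_small hc hb (n * 8) (WL.cells hχ_supp' ha_supp')
  obtain ⟨c8, hc8, e8⟩ := WL.E_one hc hb (n * 8) U hU (by rw [WL.cx_tsupport]; exact haU)
    (fun p hp => by simp [WL.cx, hU1 p hp])
  set K := 1 + c1 + c2 + c3 + c4 + c5 + c6 + c7 + c8 with hK
  have hK1 : 1 ≤ K := by linarith
  refine ⟨2 * K * Z + √(4 * K ^ 3) * Z ^ 2 + 1, by positivity, ?_⟩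
  intro h hh hh1 Λ T P hT hP j hj
  have dv : ∀ (c x : ℝ) (d : ℤ × ℤ), c ≤ K → WL.W d ^ 8 * x ≤ c → x ≤ K / WL.W d ^ 8 := by
    intro c x d h1 h2
    have := WL.W_pos d
    rw [le_div_iff₀ (by positivity)]; linarith
  have H : WL.Hyp P T K (h ^ n) :=
    { K1 := hK1
      δ0 := by positivity
      δ1 := pow_le_one₀ hh.le hh1.le
      sP := fun j => (e2 h j _ hh (hP j)).1
      sT := fun j => (e1 h j _ hh (hT j)).1
      nP := fun j => (e2 h j _ hh (hP j)).2.trans (by linarith)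
      nT := fun j => (e1 h j _ hh (hT j)).2.trans (by linarith)
      PP := fun j k => dv c3 _ _ (by linarith) (e3 h j k _ _ hh hh1 (hP j) (hP k))
      PT := fun j k => dv c4 _ _ (by linarith) (e4 h j k _ _ hh hh1 (hP j) (hT k))
      TP := fun j k => dv c5 _ _ (by linarith) (e5 h j k _ _ hh hh1 (hT j) (hP k))
      TT := fun j k => dv c6 _ _ (by linarith) (e6 h j k _ _ hh hh1 (hT j) (hT k))
      sm := fun j k hjk => by
        rw [← pow_mul]
        exact (e7 h j k _ _ hh hjk (hP j) (hT k)).trans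
          (mul_le_mul_of_nonneg_right (by linarith) (by positivity))
      one := fun j => by
        rw [← pow_mul]
        exact (e8 h j _ _ hh hh1 (hP j) (hT j)).trans
          (mul_le_mul_of_nonneg_right (by linarith) (by positivity)) }
  obtain ⟨f1, f2⟩ := WL.final hZ0 hZ H Λ
  have hp : h ^ n ≤ h ^ N := by
    rw [← Real.rpow_natCast]
    exact Real.rpow_le_rpow_of_exponent_ge hh hh1.le hn
  have hp0 : 0 ≤ h ^ n := by positivity
  have hq1 : 0 ≤ 2 * K * Z := by positivity
  have hq2 : 0 ≤ √(4 * K ^ 3) * Z ^ 2 := by positivity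
  constructor
  · refine (f1 j hj).trans ?_
    exact mul_le_mul (by linarith) hp hp0 (by linarith)
  · refine f2.trans ?_
    exact mul_le_mul (by linarith) hp hp0 (by linarith)
end
end
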